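/- arXiv:1302.3927 — 3 statements merged into one kernel-verified Lean document; each statement's English description precedes it below -/
import Mathlib

section
/- Let M be a von Neumann algebra with no central summands of type I₁. If Φ : M → M is a nonlinear derivation, then Φ is an additive derivation; in particular Φ(T + S) = Φ(T) + Φ(S) for all T, S ∈ M. -/
variable {H : Type*} [NormedAddCommGroup H] [InnerProductSpace ℂ H] [CompleteSpace H]

/-- `P` is a projection (self-adjoint idempotent) belonging to the
von Neumann algebra `M`. -/
def VNProjection (M : VonNeumannAlgebra H) (P : H →L[ℂ] H) : Prop :=
  P ∈ M ∧ IsSelfAdjoint P ∧ P * P = P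

/-- `Z` is a central projection of `M`: a projection in `M` commuting with every
element of `M`. -/
def VNCentralProjection (M : VonNeumannAlgebra H) (Z : H →L[ℂ] H) : Prop :=
  VNProjection M Z ∧ ∀ T ∈ M, Z * T = T * Z

/-- `P` is core-free: the only central projection `Q` of `M` with `Q ≤ P` is `0`. -/
def VNCoreFree (M : VonNeumannAlgebra H) (P : H →L[ℂ] H) : Prop :=
  ∀ Q, VNCentralProjection M Q → Q * P = Q → Q = 0

/-- `Z` is the central carrier of `A`: the smallest central projection of `M`
with `Z * A = A`. -/
def VNCentralCarrier (M : VonNeumannAlgebra H) (A Z : H →L[ℂ] H) : Prop :=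
  VNCentralProjection M Z ∧ Z * A = A ∧
    ∀ Q, VNCentralProjection M Q → Q * A = A → Z * Q = Z

/-- `M` has no central summands of type I₁: for every nonzero central projection `Z`
there are `A, B ∈ M` with `Z * (A * B - B * A) ≠ 0`. -/
def VNNoTypeI1 (M : VonNeumannAlgebra H) : Prop :=
  ∀ Z, VNCentralProjection M Z → Z ≠ 0 → ∃ A ∈ M, ∃ B ∈ M, Z * (A * B - B * A) ≠ 0

/-- Ring part: the additivity defect for an idempotent killed by `d`. -/
theorem ring_defect_aux {R : Type*} [Ring R] (d : R → R)
    (hd : ∀ a b, d (a * b) = d a * b + a * d b) (e : R) (he : e * e = e) (hde : d e = 0)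
    (x y : R) :
    e * (d (x + y) - d x - d y) * (1 - e) = 0 ∧
    ∀ r, e * (d (x + y) - d x - d y) * e * r * (1 - e) = 0 := by
  have h0 : d 0 = 0 := by simpa using hd 0 0
  have h1 : d 1 = 0 := by simpa using hd 1 1
  obtain ⟨f, hf⟩ : ∃ f, f = 1 - e := ⟨_, rfl⟩
  rw [← hf]
  have hef : e * f = 0 := by rw [hf, mul_sub, he, mul_one, sub_self]
  have hfe : f * e = 0 := by rw [hf, sub_mul, he, one_mul, sub_self]
  have hff : f * f = f := by nth_rw 1 [hf]; rw [sub_mul, hef, one_mul, sub_zero]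
  have hsum : e + f = 1 := by rw [hf]; abel
  have e_l : ∀ x, d (e * x) = e * d x := fun x => by rw [hd, hde, zero_mul, zero_add]
  have e_r : ∀ x, d (x * e) = d x * e := fun x => by rw [hd, hde, mul_zero, add_zero]
  have hdf : d f = 0 := by
    have a1 : e * d f = 0 := by rw [← e_l, hef, h0]
    have a2 : d f * e = 0 := by rw [← e_r, hfe, h0]
    have a3 : f * d f = d f := by
      rw [hf, sub_mul, one_mul, ← hf, a1, sub_zero]
    have a4 : d f * f = d f := by
      nth_rw 2 [hf]; rw [mul_sub, mul_one, a2, sub_zero]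
    have := hd f f
    rw [hff, a3, a4] at this
    simpa using this
  have f_l : ∀ x, d (f * x) = f * d x := fun x => by rw [hd, hdf, zero_mul, zero_add]
  have f_r : ∀ x, d (x * f) = d x * f := fun x => by rw [hd, hdf, mul_zero, add_zero]
  have split_r : ∀ x, d x = d (x * e) + d (x * f) := fun x => by
    rw [e_r, f_r, ← mul_add, hsum, mul_one]
  have split_l : ∀ x, d x = d (e * x) + d (f * x) := fun x => by
    rw [e_l, f_l, ← add_mul, hsum, one_mul]
  have add12 : ∀ x y, d (e * x * f + e * y * f) = d (e * x * f) + d (e * y * f) := by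
    intro x y
    have k1 : (e + e * x * f) * (f + e * y * f) = e * x * f + e * y * f := by
      have : (e + e * x * f) * (f + e * y * f)
        = e * f + (e * e) * y * f + e * x * (f * f) + e * x * (f * e) * y * f := by noncomm_ring
      rw [this, hef, he, hff, hfe]; noncomm_ring
    have k2 : d (e + e * x * f) = d (e * x * f) := by
      rw [split_r, add_mul, add_mul, he, mul_assoc _ f e, mul_assoc _ f f, hfe, hff, hef]
      simp [hde]
    have k3 : d (f + e * y * f) = d (e * y * f) := by
      rw [split_l, mul_add, mul_add, hff, ← mul_assoc, ← mul_assoc, ← mul_assoc, ← mul_assoc,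
        hfe, he, hef]
      simp [hdf]
    rw [← k1, hd, k2, k3, f_r, e_l, f_r, e_l]
    have : e * d x * f * (f + e * y * f) + (e + e * x * f) * (e * d y * f)
      = e * d x * (f * f) + e * d x * (f * e) * y * f + (e * e) * d y * f
        + e * x * (f * e) * d y * f := by noncomm_ring
    rw [this, hff, hfe, he]; noncomm_ring
  have P12 : ∀ x y, e * (d (x + y) - d x - d y) * f = 0 := by
    intro x y
    have h := add12 x y
    rw [← add_mul, ← mul_add] at h
    simp only [f_r, e_l] at h
    rw [mul_sub, mul_sub, sub_mul, sub_mul, h]; abel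
  refine ⟨P12 x y, fun r => ?_⟩
  have h := P12 (x * (e * r)) (y * (e * r))
  rw [← add_mul] at h
  simp only [hd] at h
  rw [← h]
  noncomm_ring

theorem ring_defect {R : Type*} [Ring R] (d : R → R)
    (hd : ∀ a b, d (a * b) = d a * b + a * d b) (e : R) (he : e * e = e)
    (x y : R) :
    e * (d (x + y) - d x - d y) * (1 - e) = 0 ∧
    ∀ r, e * (d (x + y) - d x - d y) * e * r * (1 - e) = 0 := by
  obtain ⟨a, ha⟩ : ∃ a, a = e * d e - d e * e := ⟨_, rfl⟩
  have hE := hd e e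
  rw [he] at hE
  have hz : e * d e * e = 0 := by
    have := congrArg (fun t => e * t) hE
    simp only [mul_add, ← mul_assoc, he] at this
    simpa using this
  have := ring_defect_aux (fun x => d x - (x * a - a * x)) (by
    intro u v; simp only [hd]; noncomm_ring) e he (by
    have h1 : e * a = e * d e := by
      rw [ha, mul_sub, ← mul_assoc, ← mul_assoc, he, hz, sub_zero]
    have h2 : a * e = - (d e * e) := by
      rw [ha, sub_mul, hz, mul_assoc, he, zero_sub]
    simp only [h1, h2]
    nth_rw 1 [hE]; abel) x y
  have k : (d (x + y) - ((x + y) * a - a * (x + y))) - (d x - (x * a - a * x))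
      - (d y - (y * a - a * y)) = d (x + y) - d x - d y := by noncomm_ring
  simp only [k] at this
  exact this

/-- The projection onto the closure of the range. -/
noncomputable def rangeProj (T : H →L[ℂ] H) : H →L[ℂ] H :=
  (T.range.topologicalClosure).starProjection

theorem rangeProj_sa (T : H →L[ℂ] H) : IsSelfAdjoint (rangeProj T) :=
  isSelfAdjoint_starProjection _

theorem rangeProj_idem (T : H →L[ℂ] H) : rangeProj T * rangeProj T = rangeProj T :=
  (Submodule.isIdempotentElem_starProjection _)

theorem rangeProj_mul (T : H →L[ℂ] H) : rangeProj T * T = T := by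
  ext x
  exact Submodule.starProjection_eq_self_iff.2
    (Submodule.le_topologicalClosure _ (LinearMap.mem_range_self _ x))

theorem mul_rangeProj (X T : H →L[ℂ] H) (h : X * T = 0) : X * rangeProj T = 0 := by
  have hle : T.range.topologicalClosure ≤ X.ker := by
    refine Submodule.topologicalClosure_minimal _ ?_ X.isClosed_ker
    rintro _ ⟨x, rfl⟩
    exact congrArg (fun S : H →L[ℂ] H => S x) h
  ext x
  exact hle (Submodule.starProjection_apply_mem _ x)

theorem rangeProj_comm (S T : H →L[ℂ] H) (h1 : S * T = T * S) (h2 : star S * T = T * star S) :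
    S * rangeProj T = rangeProj T * S := by
  have key : ∀ S : H →L[ℂ] H, S * T = T * S →
      S * rangeProj T = rangeProj T * S * rangeProj T := by
    intro S h
    have : ((1 - rangeProj T) * S) * T = 0 := by
      rw [mul_assoc, h, ← mul_assoc, sub_mul, one_mul, rangeProj_mul, sub_self, zero_mul]
    have := mul_rangeProj _ _ this
    rw [sub_mul, sub_mul, one_mul, sub_eq_zero] at this
    exact this
  have a := key S h1
  have b := congrArg star (key _ h2)
  simp only [star_mul, star_star, (rangeProj_sa T).star_eq] at b
  rw [a, mul_assoc, ← b]

theorem mem_of_comm (M : VonNeumannAlgebra H) (X : H →L[ℂ] H)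
    (h : ∀ S ∈ M.commutant, S * X = X * S) : X ∈ M := by
  rw [← M.commutant_commutant, VonNeumannAlgebra.mem_commutant_iff]
  exact h

theorem comm_of_mem {M : VonNeumannAlgebra H} {X S : H →L[ℂ] H} (hX : X ∈ M)
    (hS : S ∈ M.commutant) : S * X = X * S :=
  ((VonNeumannAlgebra.mem_commutant_iff.1 hS) X hX).symm

theorem rangeProj_mem (M : VonNeumannAlgebra H) {T : H →L[ℂ] H} (hT : T ∈ M) :
    rangeProj T ∈ M :=
  mem_of_comm M _ fun _ hS => rangeProj_comm _ _ (comm_of_mem hT hS)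
    (comm_of_mem hT (star_mem hS))

theorem posPart_mem (M : VonNeumannAlgebra H) {T : H →L[ℂ] H} (hT : T ∈ M) :
    T⁺ ∈ M := by
  by_cases hs : IsSelfAdjoint T
  · refine mem_of_comm M _ fun S hS => ?_
    rw [CFC.posPart_def]
    have hc : Commute T S := (comm_of_mem hT hS).symm
    exact (Commute.cfcₙ_real hc _).symm
  · rw [CFC.posPart_def, cfcₙ_apply_of_not_predicate _ hs]; exact zero_mem M

theorem smul_mem_vn (M : VonNeumannAlgebra H) {T : H →L[ℂ] H} (hT : T ∈ M) (c : ℂ) :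
    c • T ∈ M := M.toStarSubalgebra.smul_mem hT c

theorem halving (M : VonNeumannAlgebra H) (A : H →L[ℂ] H) (hA : A ∈ M) (s : ℝ)
    (h0 : 0 ≤ A) (h1 : A ≤ algebraMap ℝ _ (2 * s)) :
    ∃ P, VNProjection M P ∧ 0 ≤ A - s • P ∧ A - s • P ≤ algebraMap ℝ _ s := by
  have hsM : algebraMap ℝ (H →L[ℂ] H) s ∈ M := by
    have := smul_mem_vn M (one_mem M) (s : ℂ)
    rw [Algebra.algebraMap_eq_smul_one]
    convert this using 1
    ext x; simp
  obtain ⟨X, hX⟩ : ∃ X, X = A - algebraMap ℝ (H →L[ℂ] H) s := ⟨_, rfl⟩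
  have hXM : X ∈ M := hX ▸ sub_mem hA hsM
  have hXsa : IsSelfAdjoint X := by
    rw [hX]
    exact (IsSelfAdjoint.of_nonneg h0).sub (IsSelfAdjoint.algebraMap _ (IsSelfAdjoint.all s))
  obtain ⟨P, hP⟩ : ∃ P, P = rangeProj X⁺ := ⟨_, rfl⟩
  have hPM : P ∈ M := hP ▸ rangeProj_mem M (posPart_mem M hXM)
  have hPsa : IsSelfAdjoint P := hP ▸ rangeProj_sa _
  have hPP : P * P = P := hP ▸ rangeProj_idem _
  have pos0 := CFC.posPart_nonneg X
  have neg0 := CFC.negPart_nonneg X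
  have a1 : P * X⁺ = X⁺ := hP ▸ rangeProj_mul _
  have a2 : X⁻ * P = 0 := hP ▸ mul_rangeProj _ _ (CFC.negPart_mul_posPart X)
  have a3 : X⁺ * P = X⁺ := by
    have := congrArg star a1
    rwa [star_mul, hPsa.star_eq, (IsSelfAdjoint.of_nonneg pos0).star_eq] at this
  have a4 : P * X⁻ = 0 := by
    have := congrArg star a2
    rwa [star_mul, hPsa.star_eq, (IsSelfAdjoint.of_nonneg neg0).star_eq, star_zero] at this
  have dec := CFC.posPart_sub_negPart X hXsa
  have hPX : P * X * P = X⁺ := by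
    nth_rw 1 [← dec]; rw [mul_sub, a1, a4, sub_zero, a3]
  have hQX : (1 - P) * X * (1 - P) = - X⁻ := by
    have e1 : (1 - P) * X = - X⁻ := by
      nth_rw 1 [← dec]; rw [sub_mul, one_mul, mul_sub, a1, a4]; abel
    rw [e1, mul_sub, mul_one, neg_mul, a2]; simp
  refine ⟨P, ⟨hPM, hPsa, hPP⟩, ?_, ?_⟩
  · have hQ : IsSelfAdjoint (1 - P) := (IsSelfAdjoint.one _).sub hPsa
    have hQQ : (1 - P) * (1 - P) = 1 - P := by rw [sub_mul, one_mul, mul_sub, hPP]; simp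
    have h := hQ.conjugate_nonneg h0
    have hAX : A = X + s • (1 : H →L[ℂ] H) := by
      rw [hX, Algebra.algebraMap_eq_smul_one, sub_add_cancel]
    have e2 : (1 - P) * A * (1 - P) = - X⁻ + s • (1 - P) := by
      rw [hAX, mul_add, add_mul, hQX, mul_smul_comm, mul_one, smul_mul_assoc, hQQ]
    rw [e2] at h
    have e3 : A - s • P = X⁺ + (- X⁻ + s • (1 - P)) := by
      rw [hAX, smul_sub]; nth_rw 1 [← dec]; abel
    rw [e3]
    exact add_nonneg pos0 h
  · have hXs : X ≤ algebraMap ℝ _ s := by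
      rw [hX, sub_le_iff_le_add, ← map_add, ← two_mul]; exact h1
    have h := hPsa.conjugate_le_conjugate hXs
    rw [hPX, Algebra.algebraMap_eq_smul_one, mul_smul_comm, mul_one, smul_mul_assoc, hPP] at h
    have h2 : X ≤ s • P := (CFC.le_posPart hXsa).trans h
    rw [hX] at h2
    rw [sub_le_iff_le_add] at h2 ⊢
    rwa [add_comm]

theorem comm_bound (M : VonNeumannAlgebra H) (B : H →L[ℂ] H)
    (hB : ∀ P, VNProjection M P → P * B = B * P) (s : ℝ) (hs : 0 ≤ s) (n : ℕ) :
    ∀ (A : H →L[ℂ] H) (_ : A ∈ M) (_ : 0 ≤ A) (_ : A ≤ algebraMap ℝ _ (2 ^ n * s)),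
      ‖A * B - B * A‖ ≤ 2 * s * ‖B‖ := by
  induction n with
  | zero =>
    intro A _ h0 h1
    rw [pow_zero, one_mul] at h1
    have hn : ‖A‖ ≤ s := (CStarAlgebra.norm_le_iff_le_algebraMap A hs h0).2 h1
    have k1 := norm_sub_le (A * B) (B * A)
    have k2 := norm_mul_le A B
    have k3 := norm_mul_le B A
    have k4 := mul_le_mul_of_nonneg_right hn (norm_nonneg B)
    nlinarith
  | succ n ih =>
    intro A hA h0 h1
    rw [pow_succ', mul_assoc] at h1
    obtain ⟨P, hP, h2, h3⟩ := halving M A hA _ h0 h1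
    have hm : (2 ^ n * s) • P ∈ M := by
      convert smul_mem_vn M hP.1 ((2 ^ n * s : ℝ) : ℂ) using 1
      ext x; exact (Complex.coe_smul _ _).symm
    have := ih (A - (2 ^ n * s) • P) (sub_mem hA hm) h2 h3
    have e : (A - (2 ^ n * s) • P) * B - B * (A - (2 ^ n * s) • P) = A * B - B * A := by
      rw [sub_mul, mul_sub, smul_mul_assoc, mul_smul_comm, hB P hP]; abel
    rwa [e] at this

theorem comm_sa (M : VonNeumannAlgebra H) (B : H →L[ℂ] H)
    (hB : ∀ P, VNProjection M P → P * B = B * P) (A : H →L[ℂ] H) (hA : A ∈ M)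
    (hsa : IsSelfAdjoint A) : A * B = B * A := by
  have h1 := hsa.le_algebraMap_norm_self
  have h2 := hsa.neg_algebraMap_norm_le_self
  obtain ⟨C, hC⟩ : ∃ C, C = A + algebraMap ℝ (H →L[ℂ] H) ‖A‖ := ⟨_, rfl⟩
  have hCM : C ∈ M := by
    rw [hC, Algebra.algebraMap_eq_smul_one]
    refine add_mem hA ?_
    convert smul_mem_vn M (one_mem M) ((‖A‖ : ℝ) : ℂ) using 1
    ext x; simp
  have hC0 : 0 ≤ C := by rw [hC]; exact neg_le_iff_add_nonneg.1 h2
  have hC1 : C ≤ algebraMap ℝ _ (2 * ‖A‖) := by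
    rw [hC, two_mul, map_add]; exact add_le_add_left h1 _
  have bound : ∀ n : ℕ, ‖C * B - B * C‖ ≤ (2 * (2 * ‖A‖) * ‖B‖) * (1 / 2) ^ n := by
    intro n
    have e : (2 : ℝ) ^ n * ((2 * ‖A‖) * (1 / 2) ^ n) = 2 * ‖A‖ := by
      rw [mul_left_comm, ← mul_pow]; norm_num
    have := comm_bound M B hB ((2 * ‖A‖) * (1 / 2) ^ n) (by positivity) n C hCM hC0
      (by rw [e]; exact hC1)
    calc _ ≤ _ := this
      _ = _ := by ring
  have lim : Filter.Tendsto (fun n : ℕ => (2 * (2 * ‖A‖) * ‖B‖) * (1 / 2 : ℝ) ^ n)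
      Filter.atTop (nhds ((2 * (2 * ‖A‖) * ‖B‖) * 0)) :=
    (tendsto_pow_atTop_nhds_zero_of_lt_one (by norm_num) (by norm_num)).const_mul _
  have hle := ge_of_tendsto' lim bound
  rw [mul_zero] at hle
  have h := norm_le_zero_iff.1 hle
  rw [hC, add_mul, mul_add, (Algebra.commutes _ B : algebraMap ℝ (H →L[ℂ] H) ‖A‖ * B = _),
    add_sub_add_right_eq_sub, sub_eq_zero] at h
  exact h

theorem comm_all (M : VonNeumannAlgebra H) (B : H →L[ℂ] H)
    (hB : ∀ P, VNProjection M P → P * B = B * P) :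
    ∀ A ∈ M, A * B = B * A := by
  intro A hA
  have h1 := comm_sa M B hB (A + star A) (add_mem hA (star_mem hA)) (IsSelfAdjoint.add_star_self A)
  have h2 := comm_sa M B hB (Complex.I • (A - star A))
    (smul_mem_vn M (sub_mem hA (star_mem hA)) _) (by
      rw [IsSelfAdjoint, star_smul, star_sub, star_star]
      simp only [RCLike.star_def, Complex.conj_I]
      rw [neg_smul, ← smul_neg, neg_sub])
  rw [smul_mul_assoc, mul_smul_comm] at h2
  have h3 := smul_right_injective _ Complex.I_ne_zero h2
  rw [add_mul, mul_add] at h1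
  simp only [sub_mul, mul_sub] at h3
  have h4 : (2 : ℂ) • (A * B) = (2 : ℂ) • (B * A) := by
    rw [two_smul, two_smul]
    calc A * B + A * B = (A * B + star A * B) + (A * B - star A * B) := by abel
      _ = _ := by rw [h1, h3]; abel
  exact smul_right_injective _ (two_ne_zero) h4

/-- **Theorem 1.1.** Every nonlinear derivation on a von Neumann algebra with no
central summands of type I₁ is an additive derivation. -/
theorem nonlinear_derivation_additive (M : VonNeumannAlgebra H)
    (hM : VNNoTypeI1 M)
    (Φ : (H →L[ℂ] H) → (H →L[ℂ] H))
    (hmaps : ∀ T ∈ M, Φ T ∈ M)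
    (hder : ∀ A ∈ M, ∀ B ∈ M, Φ (A * B) = Φ A * B + A * Φ B) :
    ∀ T ∈ M, ∀ S ∈ M, Φ (T + S) = Φ T + Φ S := by
  intro T hT S hS
  obtain ⟨D, hD⟩ : ∃ D, D = Φ (T + S) - Φ T - Φ S := ⟨_, rfl⟩
  have hDM : D ∈ M := by
    rw [hD]
    exact sub_mem (sub_mem (hmaps _ (add_mem hT hS)) (hmaps _ hT)) (hmaps _ hS)
  have key : ∀ e ∈ M, e * e = e → e * D * (1 - e) = 0 ∧
      ∀ r ∈ M, e * D * e * r * (1 - e) = 0 := by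
    intro e he hee
    have := ring_defect (R := M) (fun x => ⟨Φ x, hmaps _ x.2⟩)
      (fun a b => Subtype.ext (hder a a.2 b b.2)) ⟨e, he⟩ (Subtype.ext hee) ⟨T, hT⟩ ⟨S, hS⟩
    refine ⟨?_, fun r hr => ?_⟩
    · have h := congrArg Subtype.val this.1
      rw [hD]; exact h
    · have h := congrArg Subtype.val (this.2 ⟨r, hr⟩)
      rw [hD]; exact h
  have comp : ∀ P, VNProjection M P → (1 - P) ∈ M ∧ (1 - P) * (1 - P) = 1 - P := by
    intro P hP
    refine ⟨sub_mem (one_mem M) hP.1, ?_⟩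
    rw [sub_mul, one_mul, mul_sub, hP.2.2]; simp
  have offdiag : ∀ (P X : H →L[ℂ] H), P * X * (1 - P) = 0 → (1 - P) * X * P = 0 →
      P * X = X * P := by
    intro P X h1 h2
    rw [mul_sub, mul_one, sub_eq_zero] at h1
    rw [sub_mul, sub_mul, one_mul, sub_eq_zero] at h2
    rw [h1, h2]
  have Dcen : ∀ A ∈ M, A * D = D * A := by
    refine comm_all M D fun P hP => offdiag _ _ (key P hP.1 hP.2.2).1 ?_
    simpa using (key _ (comp P hP).1 (comp P hP).2).1
  have DRcen : ∀ r ∈ M, ∀ A ∈ M, A * (D * r) = (D * r) * A := by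
    intro r hr
    have aux : ∀ e ∈ M, e * e = e → e * (D * r) * (1 - e) = 0 := by
      intro e he hee
      have := (key e he hee).2 r hr
      rw [mul_assoc e D e, ← Dcen e he, ← mul_assoc, hee] at this
      rw [← mul_assoc, this]
    refine comm_all M _ fun P hP => offdiag _ _ (aux P hP.1 hP.2.2) ?_
    simpa using aux _ (comp P hP).1 (comp P hP).2
  have hDz : D = 0 := by
    have hZ : VNCentralProjection M (rangeProj D) :=
      ⟨⟨rangeProj_mem M hDM, rangeProj_sa D, rangeProj_idem D⟩, fun A hA =>
        (rangeProj_comm A D (Dcen A hA) (Dcen _ (star_mem hA))).symm⟩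
    by_contra hne
    have hZ0 : rangeProj D ≠ 0 := by
      intro h
      apply hne
      rw [← rangeProj_mul D, h, zero_mul]
    obtain ⟨A, hA, B, hB, h⟩ := hM _ hZ hZ0
    apply h
    rw [hZ.2 _ (sub_mem (mul_mem hA hB) (mul_mem hB hA))]
    apply mul_rangeProj
    have h1 := DRcen B hB A hA
    rw [Dcen _ (sub_mem (mul_mem hA hB) (mul_mem hB hA)), mul_sub, sub_eq_zero,
      ← mul_assoc, ← mul_assoc, ← h1, ← mul_assoc, Dcen A hA]
  rw [hDz, sub_sub, eq_comm, sub_eq_zero] at hD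
  exact hD
end

section
/- If M is a von Neumann algebra with no central summands of type I₁, then for every nonzero central projection Z of M there exists a core-free projection P ∈ M whose central carrier equals Z. -/
variable {H : Type*} [NormedAddCommGroup H] [InnerProductSpace ℂ H] [CompleteSpace H]

theorem vn_ann (M : VonNeumannAlgebra H) (S : Set (H →L[ℂ] H)) (hS : ∀ s ∈ S, s ∈ M) :
    ∃ N, VNProjection M N ∧ (∀ s ∈ S, s * N = 0) ∧
      (∀ X, (∀ s ∈ S, s * X = 0) → N * X = X) ∧
      ((∀ s ∈ S, ∀ m ∈ M, s * m ∈ S) → ∀ T ∈ M, N * T = T * N) := by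
  let V : Submodule ℂ H := ⨅ s ∈ S, LinearMap.ker (s : H →ₗ[ℂ] H)
  have hVm : ∀ x, x ∈ V ↔ ∀ s ∈ S, s x = 0 := by
    intro x; simp [V, Submodule.mem_iInf]
  have hVc : IsClosed (V : Set H) := by
    have : (V : Set H) = ⋂ s ∈ S, {x | s x = 0} := by
      ext x; simp [hVm]
    rw [this]
    exact isClosed_biInter fun s _ => isClosed_eq s.continuous continuous_const
  have : CompleteSpace V := hVc.completeSpace_coe
  let N := V.starProjection
  have hproj : IsStarProjection N := isStarProjection_starProjection
  have h1 : ∀ s ∈ S, s * N = 0 := by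
    intro s hs
    ext x
    exact (hVm _).1 (V.starProjection_apply_mem x) s hs
  have h2 : ∀ X, (∀ s ∈ S, s * X = 0) → N * X = X := by
    intro X hX
    ext x
    refine Submodule.starProjection_eq_self_iff.2 ((hVm _).2 fun s hs => ?_)
    simpa using! congr($(hX s hs) x)
  have key : ∀ T, N * (T * N) = T * N → N * (star T * N) = star T * N → N * T = T * N := by
    intro T ha hb
    have := congr(star $hb)
    simp only [star_mul, star_star, hproj.isSelfAdjoint.star_eq] at this
    rw [← this, mul_assoc, ha]
  refine ⟨N, ⟨?_, hproj.isSelfAdjoint, hproj.isIdempotentElem⟩, h1, h2, ?_⟩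
  · rw [← M.commutant_commutant, VonNeumannAlgebra.mem_commutant_iff]
    have : ∀ g ∈ M.commutant, N * (g * N) = g * N := by
      intro g hg
      refine h2 _ fun s hs => ?_
      rw [← mul_assoc, VonNeumannAlgebra.mem_commutant_iff.1 hg s (hS s hs), mul_assoc, h1 s hs,
        mul_zero]
    exact fun g hg => (key g (this g hg) (this _ (star_mem hg))).symm
  · intro hSM T hT
    have : ∀ g ∈ M, N * (g * N) = g * N := by
      intro g hg
      refine h2 _ fun s hs => ?_
      rw [← mul_assoc, h1 _ (hSM s hs g hg)]
    exact key T (this T hT) (this _ (star_mem hT))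

theorem vn_compl {M : VonNeumannAlgebra H} {P : H →L[ℂ] H} (h : VNProjection M P) :
    VNProjection M (1 - P) := by
  obtain ⟨a, b, c⟩ := h
  refine ⟨sub_mem (one_mem M) a, (IsSelfAdjoint.one _).sub b, ?_⟩
  simp [mul_sub, sub_mul, c]

theorem vn_mul {M : VonNeumannAlgebra H} {P Q : H →L[ℂ] H} (h : VNProjection M P)
    (h' : VNProjection M Q) (hc : P * Q = Q * P) : VNProjection M (P * Q) := by
  refine ⟨mul_mem h.1 h'.1, ?_, ?_⟩
  · rw [IsSelfAdjoint, star_mul, h.2.1.star_eq, h'.2.1.star_eq, hc]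
  · rw [mul_assoc, ← mul_assoc Q, ← hc, mul_assoc P, h'.2.2, ← mul_assoc, h.2.2]

theorem vn_norm_split {P C : H →L[ℂ] H} (hP : IsSelfAdjoint P) (hPP : P * P = P)
    (hc : P * C = C * P) {k : ℝ} (hk : 0 ≤ k) (h1 : ‖P * C‖ ≤ k) (h2 : ‖(1 - P) * C‖ ≤ k) :
    ‖C‖ ≤ k := by
  have pyth : ∀ y : H, ‖y‖ ^ 2 = ‖P y‖ ^ 2 + ‖(1 - P) y‖ ^ 2 := by
    intro y
    have h0 : inner ℂ (P y) ((1 - P) y) = 0 := by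
      have := ContinuousLinearMap.adjoint_inner_right P y ((1 - P) y)
      rw [← this, ← ContinuousLinearMap.star_eq_adjoint, hP.star_eq]
      have : P ((1 - P) y) = 0 := by
        have : P * (1 - P) = 0 := by rw [mul_sub, hPP, mul_one, sub_self]
        simpa using! congr($this y)
      rw [this, inner_zero_right]
    have := norm_add_sq_eq_norm_sq_add_norm_sq_of_inner_eq_zero _ _ h0
    have e : P y + (1 - P) y = y := by simp
    rw [e] at this
    nlinarith [this]
  refine ContinuousLinearMap.opNorm_le_bound _ hk fun x => ?_
  have e1 : P (C x) = (P * C) (P x) := by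
    have : P * C = P * C * P := by rw [mul_assoc, ← hc, ← mul_assoc, hPP]
    simpa using! congr($this x)
  have e2 : (1 - P) (C x) = ((1 - P) * C) ((1 - P) x) := by
    have : (1 - P) * C = (1 - P) * C * (1 - P) := by
      have h3 : P * C * P = P * C := by rw [mul_assoc, ← hc, ← mul_assoc, hPP]
      have h4 : (1 - P) * C * (1 - P) = C - P * C - C * P + P * C * P := by noncomm_ring
      rw [h4, h3, ← hc, sub_mul, one_mul]
      abel
    simpa using! congr($this x)
  have b1 : ‖P (C x)‖ ≤ k * ‖P x‖ := by
    rw [e1]; exact ContinuousLinearMap.le_of_opNorm_le _ h1 _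
  have b2 : ‖(1 - P) (C x)‖ ≤ k * ‖(1 - P) x‖ := by
    rw [e2]; exact ContinuousLinearMap.le_of_opNorm_le _ h2 _
  refine le_of_sq_le_sq ?_ (by positivity)
  have b1' := pow_le_pow_left₀ (norm_nonneg _) b1 2
  have b2' := pow_le_pow_left₀ (norm_nonneg _) b2 2
  rw [pyth (C x), mul_pow, pyth x]
  nlinarith

theorem vn_cfc_mem {M : VonNeumannAlgebra H} {B : H →L[ℂ] H} (hB : B ∈ M) (f : ℝ → ℝ) :
    cfc f B ∈ M := by
  rw [← M.commutant_commutant, VonNeumannAlgebra.mem_commutant_iff]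
  intro g hg
  have : Commute B g := VonNeumannAlgebra.mem_commutant_iff.1 hg B hB
  exact (this.cfc_real f).symm

theorem vn_half_norm {B : H →L[ℂ] H} (hs : IsSelfAdjoint B) (f : ℝ → ℝ) (hf : Continuous f)
    (h : ∀ x, |x| ≤ ‖B‖ → 0 ≤ f x ∧ f x ≤ ‖B‖) :
    ‖cfc f B - algebraMap ℝ (H →L[ℂ] H) (‖B‖ / 2)‖ ≤ ‖B‖ / 2 := by
  rcases subsingleton_or_nontrivial H with hH | hH
  · have : cfc f B - algebraMap ℝ (H →L[ℂ] H) (‖B‖ / 2) = 0 := Subsingleton.elim _ _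
    rw [this, norm_zero]; positivity
  rw [← cfc_const (‖B‖ / 2) B, ← cfc_sub f (fun _ => ‖B‖ / 2) B]
  refine norm_cfc_le (by positivity) fun x hx => ?_
  have h1 := h x (by simpa using spectrum.norm_le_norm_of_mem hx)
  rw [Real.norm_eq_abs, abs_le]
  constructor <;> linarith

theorem vn_comm_bound (M : VonNeumannAlgebra H) (T : H →L[ℂ] H)
    (hT : ∀ P, VNProjection M P → P * T = T * P) (n : ℕ) :
    ∀ B ∈ M, IsSelfAdjoint B → ‖B * T - T * B‖ ≤ 2 * ‖T‖ * ‖B‖ / 2 ^ n := by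
  induction n with
  | zero =>
    intro B _ _
    have h1 := norm_sub_le (B * T) (T * B)
    have h2 := norm_mul_le B T
    have h3 := norm_mul_le T B
    simp only [pow_zero, div_one]
    nlinarith
  | succ n ih =>
    intro B hB hs
    let f : ℝ → ℝ := fun x => max x 0
    let g : ℝ → ℝ := fun x => max (-x) 0
    have hfc : Continuous f := by fun_prop
    have hgc : Continuous g := by fun_prop
    have hfg : cfc f B - cfc g B = B := by
      rw [← cfc_sub f g B]
      conv_rhs => rw [← cfc_id ℝ B]
      congr 1
      funext x
      simp only [f, g, id]
      rcases le_total x 0 with h | h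
      · rw [max_eq_right h, max_eq_left (by linarith)]; ring
      · rw [max_eq_left h, max_eq_right (by linarith)]; ring
    have hgf : cfc f B * cfc g B = 0 := by
      rw [← cfc_mul f g B, ← cfc_zero ℝ B]
      congr 1
      funext x
      simp only [f, g, Pi.zero_apply]
      rcases le_total x 0 with h | h
      · rw [max_eq_right h]; ring
      · rw [max_eq_right (a := -x) (by linarith)]; ring
    have bound : ∀ h : ℝ → ℝ, Continuous h → (∀ x, |x| ≤ ‖B‖ → 0 ≤ h x ∧ h x ≤ ‖B‖) →
        ‖cfc h B * T - T * cfc h B‖ ≤ 2 * ‖T‖ * ‖B‖ / 2 ^ (n + 1) := by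
      intro h hc hb
      have hn := vn_half_norm hs h hc hb
      have hmem : cfc h B - algebraMap ℝ (H →L[ℂ] H) (‖B‖ / 2) ∈ M := by
        rw [← cfc_const (‖B‖ / 2) B]
        exact sub_mem (vn_cfc_mem hB _) (vn_cfc_mem hB _)
      have hsa : IsSelfAdjoint (cfc h B - algebraMap ℝ (H →L[ℂ] H) (‖B‖ / 2)) := by
        rw [← cfc_const (‖B‖ / 2) B]
        exact IsSelfAdjoint.sub (cfc_predicate _ _) (cfc_predicate _ _)
      have := ih _ hmem hsa
      rw [sub_mul, mul_sub, Algebra.commutes (‖B‖ / 2) T, sub_sub_sub_cancel_right] at this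
      refine this.trans ?_
      calc _ ≤ 2 * ‖T‖ * (‖B‖ / 2) / 2 ^ n := by gcongr
        _ = _ := by rw [pow_succ]; field_simp
    have bf := bound f hfc (fun x hx => ⟨le_max_right _ _, max_le (abs_le.1 hx).2 (norm_nonneg _)⟩)
    have bg := bound g hgc (fun x hx => ⟨le_max_right _ _,
      max_le (by linarith [(abs_le.1 hx).1]) (norm_nonneg _)⟩)
    obtain ⟨N, hN, hN1, hN2, -⟩ := vn_ann M {cfc f B} (by
      rintro s rfl; exact vn_cfc_mem hB _)
    have hfN : cfc f B * N = 0 := hN1 _ rfl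
    have hNg : N * cfc g B = cfc g B := hN2 _ (by rintro s rfl; exact hgf)
    have hNf : N * cfc f B = 0 := by
      have := congr(star $hfN)
      rwa [star_mul, star_zero, hN.2.1.star_eq, (cfc_predicate f B : IsSelfAdjoint _).star_eq] at this
    have hgN : cfc g B * N = cfc g B := by
      have := congr(star $hNg)
      rwa [star_mul, hN.2.1.star_eq, (cfc_predicate g B : IsSelfAdjoint _).star_eq] at this
    have hNT := hT N hN
    have hNB : N * B = - cfc g B := by
      conv_lhs => rw [← hfg, mul_sub, hNf, hNg, zero_sub]
    have hBN : B * N = - cfc g B := by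
      conv_lhs => rw [← hfg, sub_mul, hfN, hgN, zero_sub]
    have hC1 : N * (B * T - T * B) = - (cfc g B * T - T * cfc g B) := by
      rw [mul_sub, ← mul_assoc, hNB, ← mul_assoc, hNT, mul_assoc, hNB]
      simp only [neg_mul, mul_neg]; abel
    have hC1' : (B * T - T * B) * N = - (cfc g B * T - T * cfc g B) := by
      rw [sub_mul, mul_assoc, ← hNT, ← mul_assoc, hBN, mul_assoc, hBN]
      simp only [neg_mul, mul_neg]; abel
    have hC2 : (1 - N) * (B * T - T * B) = cfc f B * T - T * cfc f B := by
      have h3 : B * T - T * B = (cfc f B - cfc g B) * T - T * (cfc f B - cfc g B) := by rw [hfg]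
      rw [sub_mul, hC1, one_mul, h3]
      noncomm_ring
    refine vn_norm_split hN.2.1 hN.2.2 (hC1.trans hC1'.symm) (by positivity) ?_ ?_
    · rw [hC1, norm_neg]; exact bg
    · rw [hC2]; exact bf

theorem vn_comm (M : VonNeumannAlgebra H) (T : H →L[ℂ] H)
    (hT : ∀ P, VNProjection M P → P * T = T * P) : ∀ A ∈ M, A * T = T * A := by
  have hsa : ∀ B ∈ M, IsSelfAdjoint B → B * T = T * B := by
    intro B hB hs
    have h := fun n => vn_comm_bound M T hT n B hB hs
    have lim : Filter.Tendsto (fun n : ℕ => 2 * ‖T‖ * ‖B‖ / 2 ^ n) Filter.atTop (nhds 0) := by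
      have := (tendsto_pow_atTop_nhds_zero_of_lt_one (r := (1 / 2 : ℝ)) (by norm_num)
        (by norm_num)).const_mul (2 * ‖T‖ * ‖B‖)
      simpa [div_eq_mul_inv] using this
    have := ge_of_tendsto' lim h
    exact sub_eq_zero.1 (norm_le_zero_iff.1 this)
  have smem : ∀ (c : ℂ) (A), A ∈ M → c • A ∈ M := fun c A hA => M.toStarSubalgebra.smul_mem hA c
  have smemR : ∀ (c : ℝ) (A), A ∈ M → c • A ∈ M := fun c A hA => by
    rw [← Complex.coe_smul]; exact smem _ _ hA
  intro A hA
  have h1 := hsa (realPart A : H →L[ℂ] H) (by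
    rw [realPart_apply_coe]
    exact smemR _ _ (add_mem hA (star_mem hA))) (realPart A).2
  have h2 := hsa (imaginaryPart A : H →L[ℂ] H) (by
    rw [imaginaryPart_apply_coe]
    exact smem _ _ (smemR _ _ (sub_mem hA (star_mem hA)))) (imaginaryPart A).2
  rw [← realPart_add_I_smul_imaginaryPart A, add_mul, mul_add, h1, smul_mul_assoc, h2,
    mul_smul_comm]

/-- Local step: below every nonzero central projection there is a nonzero core-free projection. -/
theorem vn_local (M : VonNeumannAlgebra H) (hM : VNNoTypeI1 M) (Z : H →L[ℂ] H)
    (hZ : VNCentralProjection M Z) (hZ0 : Z ≠ 0) :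
    ∃ P, VNProjection M P ∧ VNCoreFree M P ∧ Z * P = P ∧ P ≠ 0 := by
  obtain ⟨A, hA, B, hB, hAB⟩ := hM Z hZ hZ0
  obtain ⟨P, hP, hPB⟩ : ∃ P, VNProjection M P ∧ P * (Z * B) ≠ (Z * B) * P := by
    by_contra! hcon
    apply hAB
    have := vn_comm M (Z * B) hcon A hA
    rw [mul_sub, ← mul_assoc, hZ.2 A hA, mul_assoc, this, mul_assoc, sub_self]
  have hQ : VNProjection M (Z * P) := vn_mul hZ.1 hP (hZ.2 P hP.1)
  set Q := Z * P with hQdef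
  obtain ⟨N, hN, hN1, hN2, hN3⟩ := vn_ann M {X | ∃ m ∈ M, X = (1 - Q) * m} (by
    rintro s ⟨m, hm, rfl⟩; exact mul_mem (vn_compl hQ).1 hm)
  have hNc : VNCentralProjection M N := ⟨hN, hN3 (by
    rintro s ⟨m, hm, rfl⟩ m' hm'; exact ⟨m * m', mul_mem hm hm', by rw [mul_assoc]⟩)⟩
  have hQN : Q * N = N := by
    have := hN1 _ ⟨1, one_mem M, rfl⟩
    rw [mul_one, sub_mul, one_mul, sub_eq_zero] at this
    exact this.symm
  have hcomm := hNc.2 Q hQ.1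
  have hP' : VNProjection M ((1 - N) * Q) :=
    vn_mul (vn_compl hN) hQ (by rw [sub_mul, mul_sub, hcomm, one_mul, mul_one])
  refine ⟨(1 - N) * Q, hP', ?_, ?_, ?_⟩
  · intro R hR hRP
    have hRN : R * N = 0 := by
      rw [← hRP, mul_assoc, mul_assoc, hQN, sub_mul, one_mul, hN.2.2, sub_self, mul_zero]
    have hNR : N * R = 0 := by rw [← hR.2 N hN.1, hRN]
    have hRQ : R * Q = R := by
      rw [sub_mul, one_mul, mul_sub, ← mul_assoc R N Q, hRN, zero_mul, sub_zero] at hRP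
      exact hRP
    rw [← hNR]
    refine (hN2 R ?_).symm
    rintro s ⟨m, hm, rfl⟩
    rw [mul_assoc, ← hR.2 m hm, ← mul_assoc, ← hR.2 _ (vn_compl hQ).1, mul_sub, hRQ, mul_one,
      sub_self, zero_mul]
  · rw [← mul_assoc, hZ.2 _ (vn_compl hN).1, mul_assoc, hQdef, ← mul_assoc Z, hZ.1.2.2]
  · intro h0
    rw [sub_mul, one_mul, sub_eq_zero, hcomm, hQN] at h0
    apply hPB
    have h1 := hNc.2 B hB
    rw [← h0, hQdef] at h1
    rw [← mul_assoc, ← hZ.2 P hP.1, h1, hZ.2 B hB, mul_assoc]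

/-- **Lemma 2.1 (i).** In a von Neumann algebra with no central summands of type I₁,
every nonzero central projection is the central carrier of a core-free projection. -/
theorem exists_corefree_projection_with_central_carrier (M : VonNeumannAlgebra H)
    (hM : VNNoTypeI1 M) :
    ∀ Z : H →L[ℂ] H, VNCentralProjection M Z → Z ≠ 0 →
      ∃ P : H →L[ℂ] H, VNProjection M P ∧ VNCoreFree M P ∧ VNCentralCarrier M P Z := by
  intro Z hZ _
  let good : Set (Set (H →L[ℂ] H)) := {S | (∀ P ∈ S, VNProjection M P ∧ VNCoreFree M P ∧ Z * P = P)
    ∧ ∀ P ∈ S, ∀ P' ∈ S, P ≠ P' → ∀ m ∈ M, P * m * P' = 0}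
  obtain ⟨S, hSmax⟩ : ∃ S, Maximal (· ∈ good) S := by
    refine zorn_subset good fun c hc hchain => ⟨⋃₀ c, ⟨?_, ?_⟩, fun s hs => Set.subset_sUnion_of_mem hs⟩
    · rintro P ⟨s, hs, hPs⟩
      exact (hc hs).1 P hPs
    · rintro P ⟨s, hs, hPs⟩ P' ⟨s', hs', hPs'⟩ hne
      rcases hchain.total hs hs' with h | h
      · exact (hc hs').2 P (h hPs) P' hPs' hne
      · exact (hc hs).2 P hPs P' (h hPs') hne
  obtain ⟨hS1, hS2⟩ := hSmax.prop
  obtain ⟨N, hN, hN1, hN2, -⟩ := vn_ann M S (fun s hs => (hS1 s hs).1.1)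
  have hP := vn_compl hN
  -- operators killing every member of the family kill its supremum
  have hkill : ∀ A : H →L[ℂ] H, (∀ p ∈ S, A * p = 0) → A * (1 - N) = 0 := by
    intro A hA
    have := hN2 (star A) (fun s hs => by
      have := congr(star $(hA s hs))
      rwa [star_mul, star_zero, (hS1 s hs).1.2.1.star_eq] at this)
    have := congr(star $this)
    rw [star_mul, star_star, hN.2.1.star_eq] at this
    rw [mul_sub, mul_one, this, sub_self]
  have hpP : ∀ p ∈ S, p * (1 - N) = p := fun p hp => by rw [mul_sub, hN1 p hp, mul_one, sub_zero]
  have hPp : ∀ p ∈ S, (1 - N) * p = p := fun p hp => by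
    have := congr(star $(hpP p hp))
    rwa [star_mul, (hS1 p hp).1.2.1.star_eq, hP.2.1.star_eq] at this
  have hZP : Z * (1 - N) = 1 - N := by
    have := hkill (1 - Z) (fun p hp => by rw [sub_mul, one_mul, (hS1 p hp).2.2, sub_self])
    rw [sub_mul, one_mul, sub_eq_zero] at this
    exact this.symm
  refine ⟨1 - N, hP, ?_, hZ, hZP, ?_⟩
  · intro R hR hRP
    rw [← hRP]
    refine hkill R fun p hp => ?_
    obtain ⟨K, hK, hK1, hK2, hK3⟩ := vn_ann M {X | ∃ m ∈ M, X = p * m} (by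
      rintro s ⟨m, hm, rfl⟩; exact mul_mem (hS1 p hp).1.1 hm)
    have hKc := hK3 (by
      rintro s ⟨m, hm, rfl⟩ m' hm'; exact ⟨m * m', mul_mem hm hm', by rw [mul_assoc]⟩)
    have hpK : p * K = 0 := by simpa using hK1 _ ⟨1, one_mem M, rfl⟩
    have hKp : K * p = 0 := by rw [hKc p (hS1 p hp).1.1, hpK]
    have hcp : (1 - K) * p = p := by rw [sub_mul, hKp, one_mul, sub_zero]
    -- the complement of K is the central carrier of p
    have hcP : (1 - K) * (1 - N) = p := by
      have := hkill ((1 - K) - p) (fun q hq => by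
        by_cases hqp : p = q
        · subst hqp; rw [sub_mul, hcp, (hS1 p hp).1.2.2, sub_self]
        · have h1 : K * q = q := hK2 q (by
            rintro s ⟨m, hm, rfl⟩; exact hS2 p hp q hq hqp m hm)
          have h2 : p * q = 0 := by simpa using hS2 p hp q hq hqp 1 (one_mem M)
          rw [sub_mul, sub_mul, h1, h2, one_mul, sub_self, sub_zero])
      rw [sub_mul, hpP p hp, sub_eq_zero] at this
      exact this
    have hRK := hR.2 (1 - K) (vn_compl hK).1
    have hRc : R * (1 - K) = R * p := by
      conv_lhs => rw [← hRP, mul_assoc, ]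
      have : (1 - N) * (1 - K) = (1 - K) * (1 - N) := by
        have := hKc N hN.1
        simp only [sub_mul, mul_sub, one_mul, mul_one, this]; abel
      rw [this, hcP]
    have hcen : VNCentralProjection M (R * (1 - K)) := by
      refine ⟨vn_mul hR.1 (vn_compl hK) hRK, fun T hT => ?_⟩
      have h1 : (1 - K) * T = T * (1 - K) := by rw [sub_mul, mul_sub, hKc T hT, one_mul, mul_one]
      rw [mul_assoc, h1, ← mul_assoc, hR.2 T hT, mul_assoc]
    have h0 := (hS1 p hp).2.1 _ hcen (by rw [mul_assoc, hcp, hRc])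
    rw [← hRc, h0]
  · intro Q hQ hQP
    by_contra hne
    have hcen : VNCentralProjection M (Z * (1 - Q)) := by
      refine ⟨vn_mul hZ.1 (vn_compl hQ.1) (hZ.2 _ (vn_compl hQ.1).1), fun T hT => ?_⟩
      have h1 : (1 - Q) * T = T * (1 - Q) := by rw [sub_mul, mul_sub, hQ.2 T hT, one_mul, mul_one]
      rw [mul_assoc, h1, ← mul_assoc, hZ.2 T hT, mul_assoc]
    have hW0 : Z * (1 - Q) ≠ 0 := by
      rw [mul_sub, mul_one]
      exact fun h => hne (sub_eq_zero.1 h).symm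
    obtain ⟨p, hp, hpc, hWp, hp0⟩ := vn_local M hM _ hcen hW0
    have hWS : ∀ q ∈ S, Z * (1 - Q) * q = 0 := by
      intro q hq
      have : Q * q = q := by rw [← hPp q hq, ← mul_assoc, hQP]
      rw [mul_assoc, sub_mul, this, one_mul, sub_self, mul_zero]
    have hpq : ∀ q ∈ S, ∀ m ∈ M, p * m * q = 0 := by
      intro q hq m hm
      have h := hcen.2 _ (mul_mem hp.1 hm)
      rw [← hWp, mul_assoc (Z * (1 - Q)) p m, h, mul_assoc, hWS q hq, mul_zero]
    have hqp : ∀ q ∈ S, ∀ m ∈ M, q * m * p = 0 := by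
      intro q hq m hm
      have := congr(star $(hpq q hq (star m) (star_mem hm)))
      rwa [star_mul, star_mul, star_star, star_zero, hp.2.1.star_eq, (hS1 q hq).1.2.1.star_eq,
        ← mul_assoc] at this
    have hmem : insert p S ∈ good := by
      refine ⟨?_, ?_⟩
      · rintro q (rfl | hq)
        · refine ⟨hp, hpc, ?_⟩
          rw [← hWp, ← mul_assoc, ← mul_assoc, hZ.1.2.2]
        · exact hS1 q hq
      · rintro q (rfl | hq) q' (rfl | hq') hne
        · exact absurd rfl hne
        · exact hpq q' hq'
        · exact hqp q hq
        · exact hS2 q hq q' hq' hne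
    have hpS : p ∈ S := hSmax.le_of_ge hmem (Set.subset_insert p S) (Set.mem_insert p S)
    exact hp0 (by rw [← hWp, hWS p hpS])
end

section
/- If M is a von Neumann algebra with no central summands of type I₁, then M equals the two-sided ideal of M generated by all commutators AB − BA with A, B ∈ M. -/
variable {H : Type*} [NormedAddCommGroup H] [InnerProductSpace ℂ H] [CompleteSpace H]

namespace VNAux

/-- An operator that kills the range and the kernel of a self-adjoint `S` vanishes. -/
lemma eq_zero_of_ker {S X : H →L[ℂ] H} (hS : star S = S) (h1 : X * S = 0)
    (h2 : ∀ y, S y = 0 → X y = 0) : X = 0 := by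
  have h3 : S * star X = 0 := by
    have := congrArg star h1
    simpa [star_mul, hS] using this
  have h4 : X * star X = 0 := by
    ext y
    have : S (star X y) = 0 := by
      have := congrArg (fun T : H →L[ℂ] H => T y) h3
      simpa using this
    simpa using h2 _ this
  exact (CStarRing.mul_star_self_eq_zero_iff X).1 h4

lemma mem_of_comm (M : VonNeumannAlgebra H) {X : H →L[ℂ] H}
    (h : ∀ T : H →L[ℂ] H, (∀ g ∈ M, g * T = T * g) → T * X = X * T) : X ∈ M := by
  rw [← M.commutant_commutant, VonNeumannAlgebra.mem_commutant_iff]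
  intro T hT
  exact h T (VonNeumannAlgebra.mem_commutant_iff.1 hT)

lemma norm_abs_apply (A : H →L[ℂ] H) (x : H) : ‖CFC.abs A x‖ = ‖A x‖ := by
  have hS : star (CFC.abs A) = CFC.abs A := (CFC.abs_nonneg A).isSelfAdjoint
  have h := CFC.abs_mul_abs A
  have e1 : ∀ T : H →L[ℂ] H, ‖T x‖ ^ 2 = RCLike.re (inner ℂ ((star T * T) x) x) := by
    intro T
    rw [ContinuousLinearMap.star_eq_adjoint]
    exact ContinuousLinearMap.apply_norm_sq_eq_inner_adjoint_left T x
  have : ‖CFC.abs A x‖ ^ 2 = ‖A x‖ ^ 2 := by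
    rw [e1, e1, hS, h]
  exact (pow_left_inj₀ (norm_nonneg _) (norm_nonneg _) two_ne_zero).1 this

lemma comm_abs {A T : H →L[ℂ] H} (h : T * (star A * A) = (star A * A) * T) :
    T * CFC.abs A = CFC.abs A * T := by
  have : Commute (star A * A) T := h.symm
  exact (Commute.cfcₙ_nnreal this NNReal.sqrt).symm.eq

/-- Bare polar decomposition. -/
lemma exists_polar (A : H →L[ℂ] H) : ∃ V : H →L[ℂ] H, V * CFC.abs A = A ∧
    ∀ y, CFC.abs A y = 0 → V y = 0 := by
  set S := CFC.abs A with hSdef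
  have hS : star S = S := (CFC.abs_nonneg A).isSelfAdjoint
  let K : Submodule ℂ H := (LinearMap.range (S : H →ₗ[ℂ] H)).topologicalClosure
  have hK : ∀ x, S x ∈ K := fun x =>
    Submodule.le_topologicalClosure _ (LinearMap.mem_range_self _ x)
  have : CompleteSpace K := (Submodule.isClosed_topologicalClosure _).completeSpace_coe
  let e : H →ₗ[ℂ] K := (S : H →ₗ[ℂ] H).codRestrict K hK
  have hd : DenseRange e := by
    intro y
    rw [Topology.IsInducing.subtypeVal.closure_eq_preimage_closure_image]
    have : (Subtype.val '' Set.range e) = Set.range S := by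
      rw [← Set.range_comp]; rfl
    show (y : H) ∈ closure (Subtype.val '' Set.range e)
    rw [this]
    have := y.2
    exact this
  have hn : ∃ C, ∀ x, ‖(A : H →ₗ[ℂ] H) x‖ ≤ C * ‖e x‖ := by
    refine ⟨1, fun x => ?_⟩
    rw [one_mul]
    show ‖A x‖ ≤ ‖S x‖
    rw [hSdef, norm_abs_apply]
  let V0 : K →L[ℂ] H := (A : H →ₗ[ℂ] H).extendOfNorm e
  refine ⟨V0 ∘L K.orthogonalProjectionOnto, ?_, ?_⟩
  · ext x
    have h1 : K.orthogonalProjectionOnto (S x) = e x :=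
      Submodule.orthogonalProjectionOnto_mem_subspace_eq_self (e x)
    show V0 (K.orthogonalProjectionOnto (S x)) = A x
    rw [h1]
    exact LinearMap.extendOfNorm_eq hd hn x
  · intro y hy
    have : K.orthogonalProjectionOnto y = 0 := by
      rw [Submodule.orthogonalProjectionOnto_eq_zero_iff, Submodule.mem_orthogonal]
      intro u hu
      have hcl : IsClosed {u : H | inner ℂ u y = 0} :=
        isClosed_eq (by fun_prop) continuous_const
      refine closure_minimal ?_ hcl hu
      rintro _ ⟨x, rfl⟩
      show inner ℂ (S x) y = 0
      rw [← ContinuousLinearMap.adjoint_inner_right, ← ContinuousLinearMap.star_eq_adjoint, hS, hy,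
        inner_zero_right]
    show V0 (K.orthogonalProjectionOnto y) = 0
    rw [this, map_zero]

lemma polar (M : VonNeumannAlgebra H) {A : H →L[ℂ] H} (hA : A ∈ M) :
    ∃ V ∈ M, V * star V * V = V ∧ (A ≠ 0 → V ≠ 0) ∧
      (∀ P, P * A = A → P * V = V) ∧ (∀ Q, A * Q = A → V * Q = V) ∧
      (A * A = 0 → V * V = 0) := by
  obtain ⟨V, hV, hk⟩ := exists_polar A
  have hkA : ∀ y, A y = 0 → V y = 0 := fun y hy => hk y (by
    rw [← norm_eq_zero, norm_abs_apply, hy, norm_zero])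
  have hk1 : ∀ y, CFC.abs A y = 0 → A y = 0 := fun y hy => by
    rw [← norm_eq_zero, ← norm_abs_apply, hy, norm_zero]
  have hs := CFC.abs_mul_abs A
  have hcomm : ∀ T, T * (star A * A) = (star A * A) * T → T * CFC.abs A = CFC.abs A * T :=
    fun T => comm_abs
  have hS : star (CFC.abs A) = CFC.abs A := (CFC.abs_nonneg A).isSelfAdjoint
  generalize CFC.abs A = S at *
  have op : ∀ (B C : H →L[ℂ] H), (∀ y, B y = 0 → C y = 0) → ∀ Y, B * Y = 0 → C * Y = 0 := by
    intro B C h Y hY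
    ext y
    exact h _ (congrArg (fun T : H →L[ℂ] H => T y) hY)
  have hop := op S V hk
  have hopA := op A V hkA
  have hVA : star V * A = S := by
    have h1 : S * star V = star A := by rw [← hV, star_mul, hS]
    have h2 : S * (star V * A - S) = 0 := by
      rw [mul_sub, ← mul_assoc, h1, hs, sub_self]
    have h3 := hop _ h2
    have h4 : star (star V * A - S) * (star V * A - S) = 0 := by
      rw [star_sub, star_mul, star_star, hS, sub_mul, mul_assoc, h3, h2]; simp
    exact sub_eq_zero.1 ((CStarRing.star_mul_self_eq_zero_iff _).1 h4)
  have uniq : ∀ X : H →L[ℂ] H, X * S = 0 → (∀ y, S y = 0 → X y = 0) → X = 0 :=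
    fun X => eq_zero_of_ker hS
  refine ⟨V, ?_, ?_, ?_, ?_, ?_, ?_⟩
  · apply mem_of_comm
    intro T hT
    have hTA := hT A hA
    have hTS := hcomm T (by
      rw [← mul_assoc, ← hT _ (star_mem hA), mul_assoc, ← hTA, mul_assoc])
    have := uniq (T * V - V * T) (by
      rw [sub_mul, mul_assoc, mul_assoc, hV, hTS, ← mul_assoc, hV, hTA, sub_self]) (by
      intro y hy
      have : S (T y) = 0 := by
        have := congrArg (fun T : H →L[ℂ] H => T y) hTS
        simp only [mul_apply_eq_comp, hy, map_zero] at this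
        exact this.symm
      simp [hk _ hy, hk _ this])
    exact sub_eq_zero.1 this
  · have := uniq (V * star V * V - V) (by
      rw [sub_mul, mul_assoc, hV, mul_assoc, hVA, hV, sub_self]) (by
      intro y hy
      simp [hk _ hy])
    exact sub_eq_zero.1 this
  · rintro h rfl
    exact h (by rw [← hV, zero_mul])
  · intro P hP
    have := uniq (P * V - V) (by
      rw [sub_mul, mul_assoc, hV, hP, sub_self]) (by
      intro y hy
      simp [hk _ hy])
    exact sub_eq_zero.1 this
  · intro Q hQ
    have := hopA (Q - 1) (by rw [mul_sub, hQ, mul_one, sub_self])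
    rw [mul_sub, mul_one] at this
    exact sub_eq_zero.1 this
  · intro h
    refine uniq _ ?_ ?_
    · rw [mul_assoc, hV]; exact hopA _ h
    · intro y hy
      simp [hk _ hy]

end VNAux

namespace VNAux
open Filter Topology

/-- Star order on partial isometries. -/
def SLe (V W : H →L[ℂ] H) : Prop := star V * W = star V * V ∧ W * star V = V * star V

lemma SLe.refl (V : H →L[ℂ] H) : SLe V V := ⟨rfl, rfl⟩

lemma SLe.right {V W : H →L[ℂ] H} (h : SLe V W) (hV : V * star V * V = V) :
    W * (star V * V) = V := by rw [← mul_assoc, h.2, hV]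

lemma SLe.left {V W : H →L[ℂ] H} (h : SLe V W) (hV : V * star V * V = V) :
    (V * star V) * W = V := by rw [mul_assoc, h.1, ← mul_assoc, hV]

lemma SLe.adj {V W : H →L[ℂ] H} (h : SLe V W) : SLe (star V) (star W) := by
  constructor
  · simpa using congrArg Star.star h.2
  · simpa using congrArg Star.star h.1

lemma pi_star {V : H →L[ℂ] H} (hV : V * star V * V = V) :
    star V * star (star V) * star V = star V := by
  simpa [mul_assoc] using congrArg star hV

lemma SLe.trans_aux {V W X : H →L[ℂ] H} (h : SLe V W) (h' : SLe W X) (hV : V * star V * V = V)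
    (hW : W * star W * W = W) : X * star V = V * star V := by
  have h1 : star W * W * star V = star V := by
    have e := h.adj.right (pi_star hV)
    rw [star_star] at e
    rw [mul_assoc, h.2, e]
  rw [← h1, ← mul_assoc, ← mul_assoc, h'.2, hW, h.2, h1]

lemma SLe.trans {V W X : H →L[ℂ] H} (h : SLe V W) (h' : SLe W X) (hV : V * star V * V = V)
    (hW : W * star W * W = W) : SLe V X := by
  refine ⟨?_, h.trans_aux h' hV hW⟩
  have := congrArg Star.star (h.adj.trans_aux h'.adj (pi_star hV) (pi_star hW))
  simpa using this

lemma pi_norm {V : H →L[ℂ] H} (hV : V * star V * V = V) : ‖V‖ ≤ 1 := by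
  have h1 : (star V * V) * (star V * V) = star V * V := by
    rw [mul_assoc, ← mul_assoc V, hV]
  have h2 : ‖star V * V‖ = ‖V‖ * ‖V‖ := CStarRing.norm_star_mul_self
  have h3 : ‖star (star V * V) * (star V * V)‖ = ‖star V * V‖ * ‖star V * V‖ :=
    CStarRing.norm_star_mul_self
  rw [star_mul, star_star, h1, h2] at h3
  have h0 := norm_nonneg V
  by_contra h
  push Not at h
  have h4 : 1 < ‖V‖ * ‖V‖ := by nlinarith
  nlinarith

lemma SLe.norm_sq {V W : H →L[ℂ] H} (h : SLe V W) (x : H) :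
    ‖W x - V x‖ ^ 2 = ‖W x‖ ^ 2 - ‖V x‖ ^ 2 := by
  have e1 : ∀ T : H →L[ℂ] H, ‖T x‖ ^ 2 = RCLike.re (inner ℂ ((star T * T) x) x) := by
    intro T
    rw [ContinuousLinearMap.star_eq_adjoint]
    exact ContinuousLinearMap.apply_norm_sq_eq_inner_adjoint_left T x
  have h2 : star W * V = star V * V := by simpa using congrArg Star.star h.1
  have h3 : star (W - V) * (W - V) = star W * W - star V * V := by
    rw [star_sub, sub_mul, mul_sub, mul_sub, h2, h.1]; abel
  have : ‖W x - V x‖ ^ 2 = ‖(W - V) x‖ ^ 2 := by simp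
  rw [this, e1, e1, e1, h3, sub_apply, inner_sub_left, map_sub]

/-- Pointwise limit of a chain of partial isometries. -/
lemma chain_limit (C : Set (H →L[ℂ] H)) (hC : IsChain SLe C) (hne : C.Nonempty)
    (hpi : ∀ V ∈ C, V * star V * V = V) :
    ∃ (l : Filter C) (V : H →L[ℂ] H), l.NeBot ∧ (∀ W : C, ∀ᶠ X : C in l, SLe W.1 X.1) ∧
      ∀ x, Tendsto (fun W : C => W.1 x) l (𝓝 (V x)) := by
  have : Nonempty C := hne.to_subtype
  have hdir : ∀ V W : C, ∃ X : C, SLe V.1 X.1 ∧ SLe W.1 X.1 := by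
    intro V W
    by_cases h : V.1 = W.1
    · exact ⟨V, SLe.refl _, h ▸ SLe.refl _⟩
    · rcases hC V.2 W.2 h with h | h
      · exact ⟨W, h, SLe.refl _⟩
      · exact ⟨V, SLe.refl _, h⟩
  let l : Filter C := ⨅ V : C, 𝓟 {W | SLe V.1 W.1}
  have hmem : ∀ V : C, ∀ᶠ X : C in l, SLe V.1 X.1 := fun V =>
    mem_iInf_of_mem V (mem_principal_self _)
  have hl : l.NeBot := by
    refine iInf_neBot_of_directed ?_ ?_
    · intro V W
      obtain ⟨X, h1, h2⟩ := hdir V W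
      refine ⟨X, ?_, ?_⟩ <;> simp only [ge_iff_le, le_principal_iff, mem_principal]
      · exact fun Y hY => SLe.trans h1 hY (hpi _ V.2) (hpi _ X.2)
      · exact fun Y hY => SLe.trans h2 hY (hpi _ W.2) (hpi _ X.2)
    · intro V
      exact principal_neBot_iff.2 ⟨V, SLe.refl _⟩
  have hlim : ∀ x, ∃ y, Tendsto (fun W : C => W.1 x) l (𝓝 y) := by
    intro x
    apply cauchy_map_iff_exists_tendsto.1
    rw [Metric.cauchy_iff]
    refine ⟨hl.map _, fun ε hε => ?_⟩
    have hb : BddAbove (Set.range fun W : C => ‖W.1 x‖ ^ 2) := by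
      refine ⟨(1 * ‖x‖) ^ 2, ?_⟩
      rintro _ ⟨W, rfl⟩
      have := W.1.le_of_opNorm_le (pi_norm (hpi _ W.2)) x
      dsimp only
      gcongr
    obtain ⟨V, hV⟩ := exists_lt_of_lt_ciSup
      (show (⨆ W : C, ‖W.1 x‖ ^ 2) - (ε / 2) ^ 2 < ⨆ W : C, ‖W.1 x‖ ^ 2 by
        have := pow_pos (half_pos hε) 2
        linarith)
    have key : ∀ W : C, SLe V.1 W.1 → dist (W.1 x) (V.1 x) < ε / 2 := by
      intro W hW
      have h1 := hW.norm_sq x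
      have h2 := le_ciSup hb W
      rw [dist_eq_norm]
      refine lt_of_pow_lt_pow_left₀ 2 (by positivity) ?_
      linarith
    refine ⟨(fun W : C => W.1 x) '' {W | SLe V.1 W.1}, image_mem_map (hmem V), ?_⟩
    rintro _ ⟨W, hW, rfl⟩ _ ⟨W', hW', rfl⟩
    calc _ ≤ dist (W.1 x) (V.1 x) + dist (W'.1 x) (V.1 x) := dist_triangle_right _ _ _
      _ < ε / 2 + ε / 2 := add_lt_add (key _ hW) (key _ hW')
      _ = ε := add_halves ε
  choose f hf using hlim
  refine ⟨l, ContinuousLinearMap.ofTendstoOfBoundedRange f (fun W : C => W.1)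
    (tendsto_pi_nhds.2 hf) ?_, hl, hmem, hf⟩
  rw [isBounded_iff_forall_norm_le]
  refine ⟨1, ?_⟩
  rintro _ ⟨W, rfl⟩
  exact pi_norm (hpi _ W.2)

/-- Maximal partial isometries in `M` subject to a condition closed under limits of chains. -/
lemma exists_max (M : VonNeumannAlgebra H) (p : (H →L[ℂ] H) → Prop) (p0 : p 0)
    (hp : ∀ (C : Set (H →L[ℂ] H)) (l : Filter C) (V : H →L[ℂ] H), IsChain SLe C → l.NeBot →
      (∀ W ∈ C, W * star W * W = W ∧ p W) →
      (∀ x, Tendsto (fun W : C => W.1 x) l (𝓝 (V x))) → p V) :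
    ∃ V ∈ M, V * star V * V = V ∧ p V ∧
      ∀ W ∈ M, W * star W * W = W → star V * W = 0 → V * star W = 0 → p (V + W) → W = 0 := by
  let T := {V : H →L[ℂ] H // V ∈ M ∧ V * star V * V = V ∧ p V}
  have hz : ∃ m : T, ∀ a : T, SLe m.1 a.1 → SLe a.1 m.1 := by
    apply exists_maximal_of_chains_bounded (r := fun a b : T => SLe a.1 b.1)
    · intro c hc
      by_cases hne : c.Nonempty
      swap
      · exact ⟨⟨0, zero_mem M, by simp, p0⟩, fun a ha => (hne ⟨a, ha⟩).elim⟩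
      let C : Set (H →L[ℂ] H) := Subtype.val '' c
      have hCc : IsChain SLe C := by
        rintro _ ⟨a, ha, rfl⟩ _ ⟨b, hb, rfl⟩ hab
        exact hc ha hb (fun h => hab (h ▸ rfl))
      have hCpi : ∀ W ∈ C, W * star W * W = W ∧ p W := by
        rintro _ ⟨a, ha, rfl⟩
        exact a.2.2
      have hCM : ∀ W ∈ C, W ∈ M := by
        rintro _ ⟨a, ha, rfl⟩
        exact a.2.1
      obtain ⟨l, V, hl, hev, hlim⟩ := chain_limit C hCc (hne.image _) (fun W hW => (hCpi W hW).1)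
      have hVM : V ∈ M := by
        apply mem_of_comm
        intro S hS
        ext x
        have h1 : Tendsto (fun W : C => S (W.1 x)) l (𝓝 (S (V x))) :=
          (S.continuous.tendsto _).comp (hlim x)
        have h2 : Tendsto (fun W : C => S (W.1 x)) l (𝓝 (V (S x))) := by
          refine (hlim (S x)).congr fun W => ?_
          exact congrArg (fun T : H →L[ℂ] H => T x) (hS _ (hCM _ W.2))
        exact tendsto_nhds_unique h1 h2
      have hle : ∀ W ∈ C, SLe W V := by
        intro W hW
        constructor
        · ext x
          have h1 : Tendsto (fun X : C => star W (X.1 x)) l (𝓝 (star W (V x))) :=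
            ((star W).continuous.tendsto _).comp (hlim x)
          refine tendsto_nhds_unique h1 ?_
          refine tendsto_const_nhds.congr' ?_
          filter_upwards [hev ⟨W, hW⟩] with X hX
          exact congrArg (fun T : H →L[ℂ] H => T x) hX.1.symm
        · ext x
          refine tendsto_nhds_unique (hlim (star W x)) ?_
          refine tendsto_const_nhds.congr' ?_
          filter_upwards [hev ⟨W, hW⟩] with X hX
          exact congrArg (fun T : H →L[ℂ] H => T x) hX.2.symm
      have hpiV : V * star V * V = V := by
        ext x
        have h1 : Tendsto (fun X : C => (V * star V) (X.1 x)) l (𝓝 ((V * star V) (V x))) :=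
          ((V * star V).continuous.tendsto _).comp (hlim x)
        refine tendsto_nhds_unique h1 ?_
        refine (hlim x).congr fun W => ?_
        have hW := hle _ W.2
        have e : V * star V * W.1 = W.1 := by
          have : star V * W.1 = star W.1 * W.1 := by simpa using congrArg star hW.1
          rw [mul_assoc, this, hW.right (hCpi _ W.2).1]
        exact congrArg (fun T : H →L[ℂ] H => T x) e.symm
      exact ⟨⟨V, hVM, hpiV, hp C l V hCc hl hCpi hlim⟩, fun a ha => hle _ ⟨a, ha, rfl⟩⟩
    · intro a b c hab hbc
      exact SLe.trans hab hbc a.2.2.1 b.2.2.1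
  obtain ⟨⟨V, hV, hVpi, hVp⟩, hmax⟩ := hz
  refine ⟨V, hV, hVpi, hVp, fun W hW hWpi h1 h2 hpW => ?_⟩
  have h3 : star W * V = 0 := by simpa using congrArg star h1
  have h4 : W * star V = 0 := by simpa using congrArg star h2
  have hpi : (V + W) * star (V + W) * (V + W) = V + W := by
    have e : (V + W) * star (V + W) = V * star V + W * star W := by
      rw [star_add, add_mul, mul_add, mul_add, h2, h4]; abel
    rw [e, add_mul, mul_add, mul_add, hVpi, hWpi, mul_assoc, h1, mul_assoc W, h3]; simp
  have hle : SLe V (V + W) := ⟨by rw [mul_add, h1, add_zero], by rw [add_mul, h4, add_zero]⟩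
  have := (hmax ⟨V + W, add_mem hV hW, hpi, hpW⟩ hle).1
  simp only [star_add, add_mul, mul_add, h1, h3] at this
  have h5 : star W * W = 0 := by simpa using this
  exact (CStarRing.star_mul_self_eq_zero_iff _).1 h5

end VNAux

namespace VNAux

lemma starProj_comm (K : Submodule ℂ H) [K.HasOrthogonalProjection] {T : H →L[ℂ] H}
    (h : ∀ x ∈ K, T x ∈ K) (h' : ∀ x ∈ K, star T x ∈ K) :
    T * K.starProjection = K.starProjection * T := by
  have hs : star K.starProjection = K.starProjection :=
    (isStarProjection_starProjection (U := K)).isSelfAdjoint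
  have key : ∀ T : H →L[ℂ] H, (∀ x ∈ K, T x ∈ K) →
      K.starProjection * (T * K.starProjection) = T * K.starProjection := by
    intro T h
    ext x
    exact Submodule.starProjection_eq_self_iff.2 (h _ (K.starProjection_apply_mem x))
  have h1 := key T h
  have h2 := congrArg star (key _ h')
  simp only [star_mul, star_star, hs] at h2
  rw [← h1, ← mul_assoc, h2]

lemma exists_sign (M : VonNeumannAlgebra H) {a : H →L[ℂ] H} (ha : a ∈ M) (hs : star a = a)
    (hn : ‖a‖ ≤ 1) : ∃ p ∈ M, p * p = p ∧ star p = p ∧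
      (∀ T : H →L[ℂ] H, star T = T → T * a = a * T → T * p = p * T) ∧
      ‖a + a - (p + p - 1)‖ ≤ 1 := by
  set S := CFC.abs a with hSdef
  have hS0 : 0 ≤ S := CFC.abs_nonneg a
  have hS : star S = S := hS0.isSelfAdjoint
  have hSS : S * S = a * a := by rw [hSdef, CFC.abs_mul_abs, hs]
  have hcomm : ∀ T, T * a = a * T → T * S = S * T := fun T hT => comm_abs (by
    rw [hs, ← mul_assoc, hT, mul_assoc, hT, mul_assoc])
  have hSa : a * S = S * a := hcomm a rfl
  have hSn : ‖S‖ ≤ 1 := by rw [hSdef, CFC.norm_abs]; exact hn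
  have hS1 : S ≤ 1 := (CStarAlgebra.norm_le_one_iff_of_nonneg S hS0).1 hSn
  clear_value S
  let K : Submodule ℂ H := LinearMap.ker ((S - a : H →L[ℂ] H) : H →ₗ[ℂ] H)
  have hKm : ∀ x, x ∈ K ↔ (S - a) x = 0 := fun x => LinearMap.mem_ker
  have hKc : IsClosed (K : Set H) := (S - a).isClosed_ker
  have : CompleteSpace K := hKc.completeSpace_coe
  have hKT : ∀ T : H →L[ℂ] H, T * a = a * T → ∀ x ∈ K, T x ∈ K := by
    intro T hT x hx
    rw [hKm] at hx ⊢
    have e : (S - a) * T = T * (S - a) := by rw [sub_mul, mul_sub, hT, hcomm T hT]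
    have := congrArg (fun T : H →L[ℂ] H => T x) e
    simp only [mul_apply_eq_comp, hx, map_zero] at this
    exact this
  set p := K.starProjection with hp
  have hps : star p = p := (isStarProjection_starProjection (U := K)).isSelfAdjoint
  have hpp : p * p = p := (isStarProjection_starProjection (U := K)).isIdempotentElem
  have h1 : (S - a) * p = 0 := by
    ext x
    exact (hKm _).1 (K.starProjection_apply_mem x)
  have h2 : p * (S + a) = S + a := by
    ext x
    refine Submodule.starProjection_eq_self_iff.2 ((hKm _).2 ?_)
    have e : (S - a) * (S + a) = 0 := by
      rw [sub_mul, mul_add, mul_add, hSS, hSa]; abel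
    exact congrArg (fun T : H →L[ℂ] H => T x) e
  have h3 : p * S = p * a := by
    have := congrArg star h1
    rw [star_mul, star_sub, hps, hS, hs, star_zero, mul_sub] at this
    exact sub_eq_zero.1 this
  have h4 : (p + p - 1) * a = S := by
    rw [mul_add, h3] at h2
    rw [sub_mul, add_mul, h2, one_mul, add_sub_cancel_right]
  have h5 : a * (p + p - 1) = S := by
    have := congrArg star h4
    simpa only [star_mul, star_sub, star_add, star_one, hps, hS, hs] using this
  have h6 : (p + p - 1) * (p + p - 1) = 1 := by
    have : (p + p - 1) * (p + p - 1) = 4 • (p * p) - 4 • p + 1 := by noncomm_ring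
    rw [this, hpp, sub_self, zero_add]
  refine ⟨p, ?_, hpp, hps, ?_, ?_⟩
  · apply mem_of_comm
    intro T hT
    refine starProj_comm K (hKT T (hT a ha).symm) (hKT _ ?_)
    have := congrArg star (hT a ha)
    simpa [hs] using this
  · intro T hTs hT
    exact starProj_comm K (hKT T hT) (by rw [hTs]; exact hKT T hT)
  · set w := p + p - 1 with hw
    have hws : star w = w := by simp [hw, hps]
    have hTs : star (a + a - w) = a + a - w := by simp [hs, hws]
    have e : star (a + a - w) * (a + a - w) = 1 - 4 • (S - S * S) := by
      rw [hTs]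
      have : (a + a - w) * (a + a - w) = 4 • (a * a) - 2 • (a * w) - 2 • (w * a) + w * w := by
        noncomm_ring
      rw [this, h4, h5, h6, hSS]
      abel
    have pos : 0 ≤ S - S * S := by
      have e2 : S - S * S = S * (1 - S) * S + (1 - S) * S * (1 - S) := by noncomm_ring
      rw [e2]
      have hsa : star (1 - S) = 1 - S := by simp [hS]
      refine add_nonneg ?_ ?_
      · have := star_left_conjugate_nonneg (sub_nonneg.2 hS1) S
        rwa [hS] at this
      · have := star_left_conjugate_nonneg hS0 (1 - S)
        rwa [hsa] at this
    have le1 : star (a + a - w) * (a + a - w) ≤ 1 := by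
      rw [e]
      exact sub_le_self _ (nsmul_nonneg pos 4)
    have n1 := (CStarAlgebra.norm_le_one_iff_of_nonneg _ (star_mul_self_nonneg (a + a - w))).2 le1
    rw [CStarRing.norm_star_mul_self] at n1
    nlinarith [norm_nonneg (a + a - w)]

lemma comm_bound (M : VonNeumannAlgebra H) {G : H →L[ℂ] H} (hGs : star G = G)
    (hred : ∀ x ∈ M, G * x = x → x * G = x → x * x = 0 → x = 0)
    {b : H →L[ℂ] H} (hb : b ∈ M) (hGb : G * b = b) (hbG : b * G = b) (n : ℕ) :
    ∀ a ∈ M, star a = a → G * a = a * G → ‖a‖ ≤ 1 → ‖a * b - b * a‖ ≤ 2 * ‖b‖ * (1 / 2) ^ n := by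
  induction n with
  | zero =>
    intro a ha hs hGa hn
    calc _ ≤ ‖a * b‖ + ‖b * a‖ := norm_sub_le _ _
      _ ≤ ‖a‖ * ‖b‖ + ‖b‖ * ‖a‖ := add_le_add (norm_mul_le _ _) (norm_mul_le _ _)
      _ ≤ 2 * ‖b‖ * (1 / 2) ^ 0 := by nlinarith [norm_nonneg b]
  | succ n ih =>
    intro a ha hs hGa hn
    obtain ⟨p, hpM, hpp, hps, hpc, hpn⟩ := exists_sign M ha hs hn
    have hGp := hpc G hGs hGa
    have h1p : (1 - p) * p = 0 := by rw [sub_mul, hpp, one_mul, sub_self]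
    have hp1 : p * (1 - p) = 0 := by rw [mul_sub, hpp, mul_one, sub_self]
    have hq : (1 - p) ∈ M := sub_mem (one_mem M) hpM
    have hGq : G * (1 - p) = (1 - p) * G := by rw [mul_sub, sub_mul, hGp, mul_one, one_mul]
    have key : ∀ q ∈ M, ∀ r ∈ M, G * q = q * G → G * r = r * G → r * q = 0 → q * b * r = 0 := by
      intro q hq r hr hGq hGr hrq
      refine hred _ (mul_mem (mul_mem hq hb) hr) ?_ ?_ ?_
      · rw [← mul_assoc, ← mul_assoc, hGq, mul_assoc q, hGb]
      · rw [mul_assoc, ← hGr, ← mul_assoc, mul_assoc q, hbG]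
      · rw [← mul_assoc, ← mul_assoc, mul_assoc (q * b), hrq]; simp
    have k1 := key p hpM (1 - p) hq hGp hGq h1p
    have k2 := key (1 - p) hq p hpM hGq hGp hp1
    have hpb : p * b = b * p := by
      rw [mul_sub, mul_one] at k1
      rw [sub_mul, sub_mul, one_mul] at k2
      rw [sub_eq_zero.1 k1, sub_eq_zero.1 k2]
    have h2 := ih (a + a - (p + p - 1)) (sub_mem (add_mem ha ha)
      (sub_mem (add_mem hpM hpM) (one_mem M))) (by simp [hs, hps])
      (by simp only [mul_sub, sub_mul, mul_add, add_mul, hGa, hGp, mul_one, one_mul]) hpn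
    have e : (a + a - (p + p - 1)) * b - b * (a + a - (p + p - 1))
        = (2 : ℝ) • (a * b - b * a) := by
      have : (a + a - (p + p - 1)) * b - b * (a + a - (p + p - 1))
        = (2 : ℝ) • (a * b - b * a) - (2 : ℝ) • (p * b - b * p) := by
        simp only [two_smul]; noncomm_ring
      rw [this, hpb, sub_self, smul_zero, sub_zero]
    rw [e, norm_smul] at h2
    norm_num at h2
    rw [pow_succ]
    norm_num
    linarith

lemma comm_sa (M : VonNeumannAlgebra H) {G : H →L[ℂ] H} (hGs : star G = G)
    (hred : ∀ x ∈ M, G * x = x → x * G = x → x * x = 0 → x = 0)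
    {b : H →L[ℂ] H} (hb : b ∈ M) (hGb : G * b = b) (hbG : b * G = b)
    {a : H →L[ℂ] H} (ha : a ∈ M) (hs : star a = a) (hGa : G * a = a * G) : a * b = b * a := by
  have key : ∀ a ∈ M, star a = a → G * a = a * G → ‖a‖ ≤ 1 → a * b = b * a := by
    intro a ha hs hGa hn
    have ht : Filter.Tendsto (fun n : ℕ => 2 * ‖b‖ * (1 / 2 : ℝ) ^ n) Filter.atTop (nhds (2 * ‖b‖ * 0)) :=
      (tendsto_pow_atTop_nhds_zero_of_lt_one (by norm_num) (by norm_num)).const_mul _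
    have := ge_of_tendsto' ht (fun n => comm_bound M hGs hred hb hGb hbG n a ha hs hGa hn)
    rw [mul_zero] at this
    exact sub_eq_zero.1 (norm_le_zero_iff.1 this)
  let r : ℝ := (‖a‖ + 1)⁻¹
  have hr : (r : ℂ) ≠ 0 := by
    have : 0 < r := by positivity
    exact_mod_cast this.ne'
  have := key ((r : ℂ) • a) (M.toStarSubalgebra.smul_mem ha _) (by simp [star_smul, hs])
    (by rw [mul_smul_comm, smul_mul_assoc, hGa]) (by
      rw [norm_smul, Complex.norm_real, Real.norm_of_nonneg (by positivity)]
      show (‖a‖ + 1)⁻¹ * ‖a‖ ≤ 1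
      rw [inv_mul_le_iff₀ (by positivity)]
      linarith)
  rw [mul_smul_comm, smul_mul_assoc] at this
  exact smul_right_injective _ hr this

lemma comm_corner (M : VonNeumannAlgebra H) {G : H →L[ℂ] H} (hGs : star G = G)
    (hred : ∀ x ∈ M, G * x = x → x * G = x → x * x = 0 → x = 0)
    {b : H →L[ℂ] H} (hb : b ∈ M) (hGb : G * b = b) (hbG : b * G = b)
    {a : H →L[ℂ] H} (ha : a ∈ M) (hGa : G * a = a) (haG : a * G = a) : a * b = b * a := by
  have hGa' : G * star a = star a := by simpa [hGs] using congrArg star haG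
  have haG' : star a * G = star a := by simpa [hGs] using congrArg star hGa
  have h1 := comm_sa M hGs hred hb hGb hbG (a := a + star a) (add_mem ha (star_mem ha))
    (by simp [add_comm]) (by rw [mul_add, add_mul, hGa, haG, hGa', haG'])
  have h2 := comm_sa M hGs hred hb hGb hbG (a := Complex.I • (a - star a))
    (M.toStarSubalgebra.smul_mem (sub_mem ha (star_mem ha)) _)
    (by rw [star_smul, star_sub, star_star]; simp [← smul_neg])
    (by rw [mul_smul_comm, smul_mul_assoc, mul_sub, sub_mul, hGa, haG, hGa', haG'])
  rw [mul_smul_comm, smul_mul_assoc] at h2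
  have h3 := smul_right_injective _ Complex.I_ne_zero h2
  rw [add_mul, mul_add] at h1
  rw [sub_mul, mul_sub] at h3
  have h4 : (2 : ℂ) • (a * b) = (2 : ℂ) • (b * a) := by
    rw [two_smul, two_smul]
    calc a * b + a * b = (a * b + star a * b) + (a * b - star a * b) := by abel
      _ = _ := by rw [h1, h3]; abel
  exact smul_right_injective _ two_ne_zero h4

/-- Central projection complementary to the annihilator of `G0`. -/
lemma exists_central (M : VonNeumannAlgebra H) {G0 : H →L[ℂ] H} (hG0 : G0 ∈ M) :
    ∃ Z, VNCentralProjection M Z ∧ G0 * Z = G0 ∧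
      ∀ X : H →L[ℂ] H, (∀ m ∈ M, G0 * m * X = 0) → Z * X = 0 := by
  let K : Submodule ℂ H := ⨅ m : M, LinearMap.ker ((G0 * m.1 : H →L[ℂ] H) : H →ₗ[ℂ] H)
  have hKm : ∀ x, x ∈ K ↔ ∀ m ∈ M, (G0 * m) x = 0 := by
    intro x
    simp only [K, Submodule.mem_iInf, Subtype.forall]
    rfl
  have hKc : IsClosed (K : Set H) := by
    have : (K : Set H) = ⋂ m : M, {x | (G0 * m.1) x = 0} := by
      ext x
      simp only [SetLike.mem_coe, hKm, Set.mem_iInter, Subtype.forall, Set.mem_ofPred_eq]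
    rw [this]
    exact isClosed_iInter fun m => isClosed_eq (G0 * m.1).continuous continuous_const
  have : CompleteSpace K := hKc.completeSpace_coe
  have hKM : ∀ T ∈ M, ∀ x ∈ K, T x ∈ K := by
    intro T hT x hx
    rw [hKm] at hx ⊢
    intro m hm
    exact hx (m * T) (mul_mem hm hT)
  have hKM' : ∀ T : H →L[ℂ] H, (∀ g ∈ M, g * T = T * g) → ∀ x ∈ K, T x ∈ K := by
    intro T hT x hx
    rw [hKm] at hx ⊢
    intro m hm
    have := congrArg (fun T : H →L[ℂ] H => T x) (hT _ (mul_mem hG0 hm))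
    refine this.trans ?_
    show T ((G0 * m) x) = 0
    rw [hx m hm, map_zero]
  set Q := K.starProjection with hQ
  have hQs : star Q = Q := (isStarProjection_starProjection (U := K)).isSelfAdjoint
  have hQQ : Q * Q = Q := (isStarProjection_starProjection (U := K)).isIdempotentElem
  have hQM : Q ∈ M := by
    apply mem_of_comm
    intro T hT
    refine starProj_comm K (hKM' T hT) (hKM' _ fun g hg => ?_)
    have := congrArg star (hT _ (star_mem hg))
    simpa using this.symm
  have hQc : ∀ T ∈ M, Q * T = T * Q := fun T hT =>
    (starProj_comm K (hKM T hT) (hKM _ (star_mem hT))).symm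
  refine ⟨1 - Q, ⟨⟨sub_mem (one_mem M) hQM, by simp [IsSelfAdjoint, hQs], ?_⟩, ?_⟩, ?_, ?_⟩
  · rw [mul_sub, sub_mul _ _ Q, hQQ]; simp
  · intro T hT
    rw [sub_mul, mul_sub, hQc T hT]; simp
  · have : G0 * Q = 0 := by
      ext x
      have := (hKm _).1 (K.starProjection_apply_mem x) 1 (one_mem M)
      simpa using this
    rw [mul_sub, this]; simp
  · intro X hX
    have : Q * X = X := by
      ext x
      refine Submodule.starProjection_eq_self_iff.2 ((hKm _).2 fun m hm => ?_)
      exact congrArg (fun T : H →L[ℂ] H => T x) (hX m hm)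
    rw [sub_mul, this]; simp

lemma SLe.sq_aux {V W : H →L[ℂ] H} (h : SLe V W) (hV : V * star V * V = V) (hW : W * W = 0) :
    W * V = 0 ∧ V * W = 0 := by
  constructor
  · rw [← h.right hV, ← mul_assoc, hW, zero_mul]
  · rw [← h.left hV, mul_assoc, hW, mul_zero]

open Filter Topology in
lemma exists_max_nil (M : VonNeumannAlgebra H) : ∃ V ∈ M, V * star V * V = V ∧ V * V = 0 ∧
      ∀ W ∈ M, W * star W * W = W → star V * W = 0 → V * star W = 0 →
        (V + W) * (V + W) = 0 → W = 0 := by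
  refine exists_max M (fun V => V * V = 0) (by simp) ?_
  intro C l V hC hl hp hlim
  have h0 : ∀ W ∈ C, ∀ X ∈ C, W * X = 0 := by
    intro W hW X hX
    by_cases h : W = X
    · subst h; exact (hp W hW).2
    · rcases hC hW hX h with h | h
      · exact (SLe.sq_aux h (hp W hW).1 (hp X hX).2).2
      · exact (SLe.sq_aux h (hp X hX).1 (hp W hW).2).1
  have h1 : ∀ X ∈ C, V * X = 0 := by
    intro X hX
    ext x
    refine tendsto_nhds_unique (hlim (X x)) (tendsto_const_nhds.congr fun W => ?_)
    exact congrArg (fun T : H →L[ℂ] H => T x) (h0 W.1 W.2 X hX).symm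
  ext x
  refine tendsto_nhds_unique ((V.continuous.tendsto _).comp (hlim x))
    (tendsto_const_nhds.congr fun W => ?_)
  exact congrArg (fun T : H →L[ℂ] H => T x) (h1 W.1 W.2).symm

open Filter Topology in
lemma exists_max_between (M : VonNeumannAlgebra H) (E G : H →L[ℂ] H) :
    ∃ V ∈ M, V * star V * V = V ∧ (E * V = V ∧ V * G = V) ∧
      ∀ W ∈ M, W * star W * W = W → star V * W = 0 → V * star W = 0 →
        (E * (V + W) = V + W ∧ (V + W) * G = V + W) → W = 0 := by
  refine exists_max M (fun V => E * V = V ∧ V * G = V) (by simp) ?_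
  intro C l V hC hl hp hlim
  constructor
  · ext x
    refine tendsto_nhds_unique ((E.continuous.tendsto _).comp (hlim x))
      ((hlim x).congr fun W => ?_)
    exact congrArg (fun T : H →L[ℂ] H => T x) (hp W.1 W.2).2.1.symm
  · ext x
    refine tendsto_nhds_unique (hlim (G x)) ((hlim x).congr fun W => ?_)
    exact congrArg (fun T : H →L[ℂ] H => T x) (hp W.1 W.2).2.2.symm

/-- Halving with an abelian remainder dominated by the first half. -/
lemma exists_halving (M : VonNeumannAlgebra H) (hM : VNNoTypeI1 M) :
    ∃ V ∈ M, ∃ W ∈ M, V * star V * V = V ∧ V * V = 0 ∧ (star V * V) * W = W ∧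
      star V * V + V * star V + star W * W = 1 := by
  obtain ⟨V, hV, hVpi, hVV, hVmax⟩ := exists_max_nil M
  have hVs := star_mem hV
  have hVV' : star V * star V = 0 := by simpa using congrArg star hVV
  have hVpi' : star V * V * star V = star V := by simpa using pi_star hVpi
  obtain ⟨G, hG⟩ : ∃ G, G = 1 - star V * V - V * star V := ⟨_, rfl⟩
  have hGM : G ∈ M := hG ▸ sub_mem (sub_mem (one_mem M) (mul_mem hVs hV)) (mul_mem hV hVs)
  have hGs : star G = G := by simp [hG]
  have hVG : V * G = 0 := by
    rw [hG, mul_sub, mul_sub, ← mul_assoc, ← mul_assoc, hVpi, hVV]; simp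
  have hGV : G * V = 0 := by
    rw [hG, sub_mul, sub_mul, hVpi, mul_assoc (star V), hVV]; simp
  have hVsG : star V * G = 0 := by simpa [hGs] using congrArg star hGV
  have hGVs : G * star V = 0 := by simpa [hGs] using congrArg star hVG
  have hGG : G * G = G := by
    conv_lhs => enter [1]; rw [hG]
    rw [sub_mul, sub_mul, mul_assoc, mul_assoc, hVG, hVsG]; simp
  -- the corner at `G` has no nonzero square-zero elements
  have hred : ∀ x ∈ M, G * x = x → x * G = x → x * x = 0 → x = 0 := by
    intro x hx hGx hxG hxx
    by_contra hne
    obtain ⟨W, hW, hWpi, hWne, hl, hr, hsq⟩ := polar M hx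
    have hGW := hl G hGx
    have hWG := hr G hxG
    have hWW := hsq hxx
    refine hWne hne (hVmax W hW hWpi ?_ ?_ ?_)
    · rw [← hGW, ← mul_assoc, hVsG, zero_mul]
    · rw [← hWG, star_mul, hGs, ← mul_assoc, hVG, zero_mul]
    · have e1 : V * W = 0 := by rw [← hGW, ← mul_assoc, hVG, zero_mul]
      have e2 : W * V = 0 := by rw [← hWG, mul_assoc, hGV, mul_zero]
      rw [add_mul, mul_add, mul_add, hVV, hWW, e1, e2]; simp
  obtain ⟨E, hE⟩ : ∃ E, E = star V * V := ⟨_, rfl⟩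
  have hEM : E ∈ M := hE ▸ mul_mem hVs hV
  have hEs : star E = E := by simp [hE]
  obtain ⟨W, hW, hWpi, ⟨hEW, hWG⟩, hWmax⟩ := exists_max_between M E G
  have hWs := star_mem hW
  have hWpi' : star W * W * star W = star W := by simpa using pi_star hWpi
  have hGWs : G * star W = star W := by simpa [hGs] using congrArg star hWG
  have hWsE : star W * E = star W := by simpa [hEs] using congrArg star hEW
  have hEE : E * E = E := by rw [hE, ← mul_assoc, hVpi']
  obtain ⟨G0, hG0⟩ : ∃ G0, G0 = G - star W * W := ⟨_, rfl⟩
  obtain ⟨E0, hE0⟩ : ∃ E0, E0 = E - W * star W := ⟨_, rfl⟩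
  have hG0M : G0 ∈ M := hG0 ▸ sub_mem hGM (mul_mem hWs hW)
  have hE0M : E0 ∈ M := hE0 ▸ sub_mem hEM (mul_mem hW hWs)
  have hG0s : star G0 = G0 := by simp [hG0, hGs]
  have hE0s : star E0 = E0 := by simp [hE0, hEs]
  have hWG0 : W * G0 = 0 := by rw [hG0, mul_sub, hWG, ← mul_assoc, hWpi, sub_self]
  have hWsE0 : star W * E0 = 0 := by rw [hE0, mul_sub, hWsE, ← mul_assoc, hWpi', sub_self]
  have hG0Ws : G0 * star W = 0 := by simpa [hG0s] using congrArg star hWG0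
  have hG0G : G0 * G = G0 := by rw [hG0, sub_mul, hGG, mul_assoc, hWG]
  have hGG0 : G * G0 = G0 := by rw [hG0, mul_sub, hGG, ← mul_assoc, hGWs]
  have hEE0 : E * E0 = E0 := by rw [hE0, mul_sub, hEE, ← mul_assoc, hEW]
  have hG0G0 : G0 * G0 = G0 := by
    conv_lhs => enter [2]; rw [hG0]
    rw [mul_sub, hG0G, ← mul_assoc, hG0Ws]; simp
  have hE0E0 : E0 * E0 = E0 := by
    conv_lhs => enter [1]; rw [hE0]
    rw [sub_mul, hEE0, mul_assoc, hWsE0]; simp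
  have hEmG : ∀ m ∈ M, E0 * m * G0 = 0 := by
    intro m hm
    by_contra hne
    obtain ⟨X, hX, hXpi, hXne, hl, hr, -⟩ := polar M (mul_mem (mul_mem hE0M hm) hG0M)
    have h1 := hl E0 (by rw [← mul_assoc, ← mul_assoc, hE0E0])
    have h2 := hr G0 (by rw [mul_assoc, hG0G0])
    refine hXne hne (hWmax X hX hXpi ?_ ?_ ⟨?_, ?_⟩)
    · rw [← h1, ← mul_assoc, hWsE0, zero_mul]
    · rw [← h2, star_mul, hG0s, ← mul_assoc, hWG0, zero_mul]
    · rw [mul_add, hEW, ← h1, ← mul_assoc, hEE0]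
    · rw [add_mul, hWG, ← h2, mul_assoc, hG0G]
  have hGmE : ∀ m ∈ M, G0 * m * E0 = 0 := by
    intro m hm
    have := congrArg star (hEmG _ (star_mem hm))
    simpa [hG0s, hE0s, mul_assoc] using this
  obtain ⟨Z, hZ, hG0Z, hZX⟩ := exists_central M hG0M
  have hZs : star Z = Z := hZ.1.2.1
  have hZZ : Z * Z = Z := hZ.1.2.2
  have hZc := hZ.2
  have hZE0 : Z * E0 = 0 := hZX _ hGmE
  have hZWs : Z * star W = 0 := by
    apply hZX
    intro m hm
    have h1 := comm_corner M hGs hred (b := G0) hG0M hGG0 hG0G (a := G * m * G)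
      (mul_mem (mul_mem hGM hm) hGM) (by rw [← mul_assoc, ← mul_assoc, hGG])
      (by rw [mul_assoc, hGG])
    calc G0 * m * star W = G0 * G * m * (G * star W) := by rw [hG0G, hGWs]
      _ = (G0 * (G * m * G)) * star W := by simp only [mul_assoc]
      _ = 0 := by rw [← h1, mul_assoc, hG0Ws, mul_zero]
  have hZW : Z * W = 0 := by
    rw [hZc W hW]; simpa [hZs] using congrArg star hZWs
  have hZE : Z * E = 0 := by
    have : E = E0 + W * star W := by rw [hE0]; abel
    rw [this, mul_add, hZE0, ← mul_assoc, hZW]; simp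
  have hZV : Z * V = 0 := by
    calc Z * V = V * Z := hZc V hV
      _ = V * (star V * V) * Z := by rw [← mul_assoc, hVpi]
      _ = V * (Z * E) := by rw [mul_assoc, ← hE, hZc E hEM]
      _ = 0 := by rw [hZE, mul_zero]
  have hZG : Z * G = Z := by
    rw [hG, mul_sub, mul_sub, ← hE, hZE, ← mul_assoc, hZV]; simp
  have hZ0 : Z = 0 := by
    by_contra hne
    obtain ⟨A, hA, B, hB, hAB⟩ := hM Z hZ hne
    apply hAB
    have h1 := comm_corner M hGs hred (b := G * B * G)
      (mul_mem (mul_mem hGM hB) hGM) (by rw [← mul_assoc, ← mul_assoc, hGG])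
      (by rw [mul_assoc, hGG]) (a := G * A * G)
      (mul_mem (mul_mem hGM hA) hGM) (by rw [← mul_assoc, ← mul_assoc, hGG])
      (by rw [mul_assoc, hGG])
    have key : ∀ A ∈ M, ∀ B ∈ M, Z * ((G * A * G) * (G * B * G)) = Z * (A * B) := by
      intro A hA B hB
      have hGZ : G * Z = Z := by rw [← hZc G hGM, hZG]
      have a1 : ∀ A ∈ M, Z * (G * A * G) = Z * A := by
        intro A hA
        rw [← mul_assoc, ← mul_assoc, hZG, hZc A hA, mul_assoc, hZG]
      rw [← mul_assoc, a1 A hA, hZc A hA, mul_assoc, a1 B hB, ← mul_assoc, ← hZc A hA, mul_assoc]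
    rw [mul_sub, ← key A hA B hB, ← key B hB A hA, h1, sub_self]
  have hG00 : G0 = 0 := by rw [← hG0Z, hZ0, mul_zero]
  refine ⟨V, hV, W, hW, hVpi, hVV, hE ▸ hEW, ?_⟩
  have : star W * W = G := (sub_eq_zero.1 (hG0 ▸ hG00)).symm
  rw [this, hG]; abel

end VNAux

/-- **Lemma 2.1 (ii).** A von Neumann algebra with no central summands of type I₁
equals the two-sided ideal generated by all its commutators. -/
theorem ideal_generated_by_commutators_eq_top (M : VonNeumannAlgebra H)
    (hM : VNNoTypeI1 M) :
    TwoSidedIdeal.span {x : M | ∃ a b : M, x = a * b - b * a} = ⊤ := by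
  obtain ⟨V, hV, W, hW, hVpi, hVV, hEW, hsum⟩ := VNAux.exists_halving M hM
  set J := TwoSidedIdeal.span {x : M | ∃ a b : M, x = a * b - b * a} with hJ
  let v : M := ⟨V, hV⟩
  let vs : M := ⟨star V, star_mem hV⟩
  let w : M := ⟨W, hW⟩
  let ws : M := ⟨star W, star_mem hW⟩
  have hv : v ∈ J := by
    apply TwoSidedIdeal.subset_span
    refine ⟨v, vs * v, Subtype.ext ?_⟩
    show V = V * (star V * V) - (star V * V) * V
    rw [← mul_assoc, hVpi, mul_assoc, hVV]; simp
  have h1 : vs * v ∈ J := J.mul_mem_left _ _ hv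
  have h2 : v * vs ∈ J := J.mul_mem_right _ _ hv
  have h3 : w ∈ J := by
    have : w = (vs * v) * w := Subtype.ext hEW.symm
    rw [this]
    exact J.mul_mem_right _ _ h1
  have h4 : ws * w ∈ J := J.mul_mem_left _ _ h3
  have h5 : (1 : M) ∈ J := by
    have : (1 : M) = vs * v + v * vs + ws * w := Subtype.ext hsum.symm
    rw [this]
    exact J.add_mem (J.add_mem h1 h2) h4
  exact (TwoSidedIdeal.one_mem_iff J).1 h5
end
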